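/- arXiv:1606.03602 — 4 statements merged into one kernel-verified Lean document; each statement's English description precedes it below -/
import Mathlib

section
/- Let T>0, a≥0 and 0<m<sqrt((π/T)²+(a/2)²). Then there exists a continuous function G:[0,T]×[0,T]→ℝ such that: (G1) for each continuous h:[0,T]→ℝ, the function x(t)=∫₀ᵀ G(t,s)h(s) ds is the unique solution of the linear periodic problem x''(t)+a x'(t)+m² x(t)=h(t) on [0,T], x(0)=x(T), x'(0)=x'(T); (G2) G(t,s)>0 for all (t,s)∈[0,T]×[0,T]; (G3) ∫₀ᵀ G(t,s) ds = 1/m² for all t∈[0,T]; and (G4) there exists a constant c∈(0,1) such that G(t,s) ≥ G(s,s) ≥ c·G(t,s) for all (t,s)∈[0,T]×[0,T]. -/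
open Set Real

noncomputable def pd1 (T : ℝ) (x : ℝ → ℝ) : ℝ → ℝ := derivWithin x (Set.Icc 0 T)

noncomputable def pd2 (T : ℝ) (x : ℝ → ℝ) : ℝ → ℝ := derivWithin (pd1 T x) (Set.Icc 0 T)

/-- `x` is a (twice continuously differentiable) solution of the linear periodic problem
`x'' + a x' + m² x = h` on `[0,T]`, `x(0)=x(T)`, `x'(0)=x'(T)`. -/
def IsLinSol (T a m : ℝ) (h x : ℝ → ℝ) : Prop :=
  ContDiffOn ℝ 2 x (Set.Icc 0 T) ∧
  (∀ t ∈ Set.Icc 0 T, pd2 T x t + a * pd1 T x t + m ^ 2 * x t = h t) ∧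
  x 0 = x T ∧ pd1 T x 0 = pd1 T x T

/-- Property (G1): for each continuous `h`, `t ↦ ∫₀ᵀ G(t,s) h(s) ds` is the unique solution
of the linear periodic problem. -/
def PropG1 (T a m : ℝ) (G : ℝ → ℝ → ℝ) : Prop :=
  ∀ h : ℝ → ℝ, ContinuousOn h (Set.Icc 0 T) →
    IsLinSol T a m h (fun t => ∫ s in (0:ℝ)..T, G t s * h s) ∧
    ∀ x : ℝ → ℝ, IsLinSol T a m h x →
      ∀ t ∈ Set.Icc 0 T, x t = ∫ s in (0:ℝ)..T, G t s * h s

lemma exSC (T a m : ℝ) (hT : 0 < T) (ha : 0 ≤ a) (hm : 0 < m)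
    (hm' : m < Real.sqrt ((Real.pi / T) ^ 2 + (a / 2) ^ 2)) (k : ℝ) (hk : k = m ^ 2 - (a / 2) ^ 2) :
    ∃ S C : ℝ → ℝ, (∀ x, HasDerivAt S (C x) x) ∧ (∀ x, HasDerivAt C (-(k * S x)) x) ∧
      S 0 = 0 ∧ C 0 = 1 ∧ (∀ x y, S (x + y) = S x * C y + C x * S y) ∧
      (∀ x y, C (x + y) = C x * C y - k * (S x * S y)) ∧
      (∀ x, S (-x) = - S x) ∧ (∀ x, C (-x) = C x) ∧ (∀ x, 0 < x → x ≤ T → 0 < S x) ∧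
      C T < Real.cosh (a / 2 * T) := by
  have hm2 : m ^ 2 < (Real.pi / T) ^ 2 + (a / 2) ^ 2 := (Real.lt_sqrt hm.le).1 hm'
  rcases lt_trichotomy k 0 with h | h | h
  · obtain ⟨w, hw, hwk⟩ : ∃ w : ℝ, 0 < w ∧ k = - w ^ 2 :=
      ⟨Real.sqrt (-k), Real.sqrt_pos.2 (by linarith), by rw [Real.sq_sqrt (by linarith)]; ring⟩
    subst hwk
    refine ⟨fun x => Real.sinh (w * x) / w, fun x => Real.cosh (w * x), ?_, ?_, by simp, by simp,
      ?_, ?_, ?_, ?_, ?_, ?_⟩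
    · intro x
      have := (((hasDerivAt_id' x).const_mul w).sinh).div_const w
      refine HasDerivAt.congr_deriv (this) ?_
      simp; field_simp
    · intro x
      have := (((hasDerivAt_id' x).const_mul w).cosh)
      refine HasDerivAt.congr_deriv (this) ?_
      simp; field_simp
    · intro x y
      dsimp only; rw [mul_add, Real.sinh_add]; field_simp
    · intro x y
      dsimp only; rw [mul_add, Real.cosh_add]; field_simp; ring
    · intro x; dsimp only; rw [mul_neg, Real.sinh_neg]; ring
    · intro x; dsimp only; rw [mul_neg, Real.cosh_neg]
    · intro x hx _
      have : 0 < Real.sinh (w * x) := Real.sinh_pos_iff.2 (by positivity)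
      positivity
    · show Real.cosh (w * T) < _
      rw [Real.cosh_lt_cosh, abs_of_pos (by positivity), abs_of_nonneg (by positivity)]
      have : w < a / 2 := by
        apply lt_of_pow_lt_pow_left₀ 2 (by positivity)
        nlinarith
      nlinarith
  · subst h
    refine ⟨fun x => x, fun x => 1, ?_, ?_, by simp, by simp,
      ?_, ?_, ?_, ?_, ?_, ?_⟩
    · intro x; exact hasDerivAt_id x
    · intro x; simpa using hasDerivAt_const x (1:ℝ)
    · intro x y; ring
    · intro x y; ring
    · intro x; rfl
    · intro x; rfl
    · intro x hx _; exact hx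
    · show 1 < _
      rw [Real.one_lt_cosh]
      have : a ≠ 0 := by rintro rfl; nlinarith
      positivity
  · obtain ⟨w, hw, hwk⟩ : ∃ w : ℝ, 0 < w ∧ k = w ^ 2 :=
      ⟨Real.sqrt k, Real.sqrt_pos.2 (by linarith), by rw [Real.sq_sqrt (by linarith)]⟩
    subst hwk
    have hwT : w * T < Real.pi := by
      rw [← lt_div_iff₀ hT]
      apply lt_of_pow_lt_pow_left₀ 2 (by positivity)
      linarith
    refine ⟨fun x => Real.sin (w * x) / w, fun x => Real.cos (w * x), ?_, ?_, by simp, by simp,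
      ?_, ?_, ?_, ?_, ?_, ?_⟩
    · intro x
      have := (((hasDerivAt_id' x).const_mul w).sin).div_const w
      refine HasDerivAt.congr_deriv (this) ?_
      simp; field_simp
    · intro x
      have := (((hasDerivAt_id' x).const_mul w).cos)
      refine HasDerivAt.congr_deriv (this) ?_
      simp; field_simp
    · intro x y
      dsimp only; rw [mul_add, Real.sin_add]; field_simp
    · intro x y
      dsimp only; rw [mul_add, Real.cos_add]; field_simp
    · intro x; dsimp only; rw [mul_neg, Real.sin_neg]; ring
    · intro x; dsimp only; rw [mul_neg, Real.cos_neg]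
    · intro x hx hxT
      have : 0 < Real.sin (w * x) := Real.sin_pos_of_pos_of_lt_pi (by positivity) (by nlinarith)
      positivity
    · show Real.cos (w * T) < _
      have h1 : Real.cos (w * T) < Real.cos 0 :=
        Real.cos_lt_cos_of_nonneg_of_le_pi le_rfl hwT.le (by positivity)
      rw [Real.cos_zero] at h1
      exact h1.trans_le (Real.one_le_cosh _)

lemma exPQ (T a m : ℝ) (hT : 0 < T) (ha : 0 ≤ a) (hm : 0 < m)
    (hm' : m < Real.sqrt ((Real.pi / T) ^ 2 + (a / 2) ^ 2)) (k : ℝ) (hk : k = m ^ 2 - (a / 2) ^ 2) :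
    ∃ P Q : ℝ → ℝ, (∀ x, HasDerivAt P (-(a / 2) * P x + Q x) x) ∧
      (∀ x, HasDerivAt Q (-(a / 2) * Q x - k * P x) x) ∧
      P 0 = 0 ∧ Q 0 = 1 ∧ (∀ x y, P (x + y) = P x * Q y + Q x * P y) ∧
      (∀ x y, Q (x + y) = Q x * Q y - k * (P x * P y)) ∧
      (∀ x, 0 < x → x ≤ T → 0 < P x) ∧
      (∀ r, 0 < r → r < T → 0 < P T * Q r - Q T * P r) ∧
      0 < 1 - 2 * Q T + Q T ^ 2 + k * P T ^ 2 := by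
  obtain ⟨S, C, hS, hC, S0, C0, Sa, Ca, So, Ce, Sp, hD⟩ := exSC T a m hT ha hm hm' k hk
  have hE : ∀ x, HasDerivAt (fun x => Real.exp (-(a / 2) * x)) (-(a/2) * Real.exp (-(a / 2) * x)) x := by
    intro x
    have := ((hasDerivAt_id' x).const_mul (-(a/2))).exp
    refine HasDerivAt.congr_deriv (this) ?_
    simp; ring
  refine ⟨fun x => Real.exp (-(a / 2) * x) * S x, fun x => Real.exp (-(a / 2) * x) * C x,
    ?_, ?_, by simp [S0], by simp [C0], ?_, ?_, ?_, ?_, ?_⟩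
  · intro x
    refine HasDerivAt.congr_deriv ((hE x).mul (hS x)) ?_
    ring
  · intro x
    refine HasDerivAt.congr_deriv ((hE x).mul (hC x)) ?_
    ring
  · intro x y
    dsimp only; rw [mul_add, Real.exp_add, Sa]; ring
  · intro x y
    dsimp only; rw [mul_add, Real.exp_add, Ca]; ring
  · intro x h1 h2
    have := Sp x h1 h2
    positivity
  · intro r h1 h2
    have h3 := Sp (T + -r) (by linarith) (by linarith)
    rw [Sa, So, Ce] at h3
    have : 0 < Real.exp (-(a / 2) * T) * Real.exp (-(a / 2) * r) := by positivity
    have := mul_pos this h3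
    dsimp only
    nlinarith
  · have h1 := Ca T (-T)
    rw [So, Ce, add_neg_cancel, C0] at h1
    have h2 : Real.exp (-(a / 2) * T) * Real.exp (a / 2 * T) = 1 := by
      rw [← Real.exp_add]; simp
    rw [Real.cosh_eq, show -(a / 2 * T) = -(a/2) * T by ring] at hD
    have hp := Real.exp_pos (-(a / 2) * T)
    dsimp only
    generalize Real.exp (-(a / 2) * T) = e at *
    generalize Real.exp ((a / 2) * T) = f at *
    have h3 : 1 - 2 * (e * C T) + (e * C T) ^ 2 + k * (e * S T) ^ 2 = 2 * e * ((f + e) / 2 - C T) := by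
      linear_combination e ^ 2 * (-h1) - h2
    rw [h3]
    have : 0 < (f + e) / 2 - C T := by linarith
    positivity

lemma pd_of_eqOn (T : ℝ) (hT : 0 < T) (x y y1 y2 : ℝ → ℝ) (hxy : ∀ t ∈ Icc 0 T, x t = y t)
    (h1 : ∀ t, HasDerivAt y (y1 t) t) (h2 : ∀ t, HasDerivAt y1 (y2 t) t) :
    (∀ t ∈ Icc 0 T, pd1 T x t = y1 t) ∧ (∀ t ∈ Icc 0 T, pd2 T x t = y2 t) := by
  have hu := uniqueDiffOn_Icc hT
  have A : ∀ t ∈ Icc 0 T, pd1 T x t = y1 t := by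
    intro t ht
    unfold pd1
    rw [derivWithin_congr hxy (hxy t ht)]
    exact (h1 t).hasDerivWithinAt.derivWithin (hu t ht)
  refine ⟨A, ?_⟩
  intro t ht
  unfold pd2
  rw [derivWithin_congr A (A t ht)]
  exact (h2 t).hasDerivWithinAt.derivWithin (hu t ht)

lemma isLinSol_of (T a m : ℝ) (hT : 0 < T) (h x y y1 y2 : ℝ → ℝ) (hxy : ∀ t ∈ Icc 0 T, x t = y t)
    (h1 : ∀ t, HasDerivAt y (y1 t) t) (h2 : ∀ t, HasDerivAt y1 (y2 t) t) (h3 : Continuous y2)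
    (he : ∀ t ∈ Icc 0 T, y2 t + a * y1 t + m ^ 2 * y t = h t) (hb : y 0 = y T)
    (hb' : y1 0 = y1 T) : IsLinSol T a m h x := by
  obtain ⟨A, B⟩ := pd_of_eqOn T hT x y y1 y2 hxy h1 h2
  have m0 : (0:ℝ) ∈ Icc 0 T := ⟨le_rfl, hT.le⟩
  have mT : T ∈ Icc 0 T := ⟨hT.le, le_rfl⟩
  refine ⟨?_, ?_, ?_, ?_⟩
  · have d1 : deriv y = y1 := funext fun t => (h1 t).deriv
    have d2 : deriv y1 = y2 := funext fun t => (h2 t).deriv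
    have c1 : ContDiff ℝ 1 y1 := by
      rw [contDiff_one_iff_deriv, d2]
      exact ⟨fun t => (h2 t).differentiableAt, h3⟩
    have c2 : ContDiff ℝ (1 + 1) y := by
      rw [contDiff_succ_iff_deriv, d1]
      exact ⟨fun t => (h1 t).differentiableAt, by simp, c1⟩
    have c3 : ContDiff ℝ 2 y := by
      rw [← one_add_one_eq_two]; exact c2
    exact c3.contDiffOn.congr hxy
  · intro t ht
    rw [A t ht, B t ht, hxy t ht, he t ht]
  · rw [hxy 0 m0, hxy T mT, hb]
  · rw [A 0 m0, A T mT, hb']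

lemma linSol_deriv (T a m : ℝ) (hT : 0 < T) (h x : ℝ → ℝ) (hx : IsLinSol T a m h x) :
    ∀ t ∈ Icc 0 T, HasDerivWithinAt x (pd1 T x t) (Icc 0 T) t ∧
      HasDerivWithinAt (pd1 T x) (pd2 T x t) (Icc 0 T) t := by
  intro t ht
  have hu := uniqueDiffOn_Icc hT
  have hc := hx.1
  refine ⟨((hc.differentiableOn (by norm_num)) t ht).hasDerivWithinAt, ?_⟩
  have : ContDiffOn ℝ 1 (derivWithin x (Icc 0 T)) (Icc 0 T) :=
    hc.derivWithin hu (by norm_num)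
  exact ((this.differentiableOn (by norm_num)) t ht).hasDerivWithinAt

lemma uniq (T a m k : ℝ) (hT : 0 < T) (hk : k = m ^ 2 - (a / 2) ^ 2) (P Q : ℝ → ℝ)
    (hP : ∀ x, HasDerivAt P (-(a / 2) * P x + Q x) x)
    (hQ : ∀ x, HasDerivAt Q (-(a / 2) * Q x - k * P x) x)
    (P0 : P 0 = 0) (Q0 : Q 0 = 1) (Pa : ∀ x y, P (x + y) = P x * Q y + Q x * P y)
    (Qa : ∀ x y, Q (x + y) = Q x * Q y - k * (P x * P y))
    (hD : 0 < 1 - 2 * Q T + Q T ^ 2 + k * P T ^ 2)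
    (h x y : ℝ → ℝ) (hx : IsLinSol T a m h x) (hy : IsLinSol T a m h y) :
    ∀ t ∈ Icc 0 T, x t = y t := by
  have m0 : (0:ℝ) ∈ Icc 0 T := ⟨le_rfl, hT.le⟩
  have mT : T ∈ Icc 0 T := ⟨hT.le, le_rfl⟩
  set z : ℝ → ℝ := fun t => x t - y t with hz
  set w : ℝ → ℝ := fun t => pd1 T x t - pd1 T y t + a / 2 * z t with hw
  have dz : ∀ t ∈ Icc 0 T, HasDerivWithinAt z (w t - a / 2 * z t) (Icc 0 T) t := by
    intro t ht
    refine HasDerivWithinAt.congr_deriv ((linSol_deriv T a m hT h x hx t ht).1.sub (linSol_deriv T a m hT h y hy t ht).1) ?_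
    simp [hw]
  have dw : ∀ t ∈ Icc 0 T, HasDerivWithinAt w (-(a / 2) * w t - k * z t) (Icc 0 T) t := by
    intro t ht
    refine HasDerivWithinAt.congr_deriv (((linSol_deriv T a m hT h x hx t ht).2.sub (linSol_deriv T a m hT h y hy t ht).2).add
      ((dz t ht).const_mul (a / 2))) ?_
    have e1 := hx.2.1 t ht
    have e2 := hy.2.1 t ht
    simp only [hw, hz]
    rw [hk]
    linear_combination e1 - e2
  have dPn : ∀ t, HasDerivAt (fun t => P (-t)) (a / 2 * P (-t) - Q (-t)) t := by
    intro t
    refine HasDerivAt.congr_deriv ((hP (-t)).comp t (hasDerivAt_neg t)) ?_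
    ring
  have dQn : ∀ t, HasDerivAt (fun t => Q (-t)) (a / 2 * Q (-t) + k * P (-t)) t := by
    intro t
    refine HasDerivAt.congr_deriv ((hQ (-t)).comp t (hasDerivAt_neg t)) ?_
    ring
  have const : ∀ f : ℝ → ℝ, (∀ t ∈ Icc 0 T, HasDerivWithinAt f 0 (Icc 0 T) t) →
      ∀ t ∈ Icc 0 T, f t = f 0 := by
    intro f hf
    apply constant_of_derivWithin_zero
    · intro t ht; exact (hf t ht).differentiableWithinAt
    · intro t ht
      have ht' := Ico_subset_Icc_self ht
      exact (hf t ht').derivWithin (uniqueDiffOn_Icc hT t ht')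
  have k1 := const (fun t => Q (-t) * z t + P (-t) * w t) (by
    intro t ht
    refine HasDerivWithinAt.congr_deriv (((dQn t).hasDerivWithinAt.mul (dz t ht)).add ((dPn t).hasDerivWithinAt.mul (dw t ht))) ?_
    ring)
  have k2 := const (fun t => Q (-t) * w t - k * (P (-t) * z t)) (by
    intro t ht
    refine HasDerivWithinAt.congr_deriv (((dQn t).hasDerivWithinAt.mul (dw t ht)).sub
      (((dPn t).hasDerivWithinAt.mul (dz t ht)).const_mul k)) ?_
    ring)
  simp only [neg_zero, P0, Q0] at k1 k2
  have I1 : ∀ t, P t * Q (-t) + Q t * P (-t) = 0 := by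
    intro t; rw [← Pa, add_neg_cancel, P0]
  have I2 : ∀ t, Q t * Q (-t) - k * (P t * P (-t)) = 1 := by
    intro t; rw [← Qa, add_neg_cancel, Q0]
  have fz : ∀ t ∈ Icc 0 T, z t = Q t * z 0 + P t * w 0 := by
    intro t ht
    linear_combination Q t * k1 t ht + P t * k2 t ht - w t * I1 t - z t * I2 t
  have fw : ∀ t ∈ Icc 0 T, w t = Q t * w 0 - k * P t * z 0 := by
    intro t ht
    linear_combination Q t * k2 t ht - k * P t * k1 t ht + k * z t * I1 t - w t * I2 t
  have zT : z T = z 0 := by simp only [hz]; rw [hx.2.2.1, hy.2.2.1]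
  have wT : w T = w 0 := by simp only [hw]; rw [zT, hx.2.2.2, hy.2.2.2]
  have e1 := fz T mT
  have e2 := fw T mT
  rw [zT] at e1
  rw [wT] at e2
  have z0 : z 0 = 0 := by
    have : (1 - 2 * Q T + Q T ^ 2 + k * P T ^ 2) * z 0 = 0 := by
      linear_combination (1 - Q T) * e1 + P T * e2
    rcases mul_eq_zero.1 this with h | h
    · exact absurd h hD.ne'
    · exact h
  have w0 : w 0 = 0 := by
    have : (1 - 2 * Q T + Q T ^ 2 + k * P T ^ 2) * w 0 = 0 := by
      linear_combination (1 - Q T) * e2 - k * P T * e1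
    rcases mul_eq_zero.1 this with h | h
    · exact absurd h hD.ne'
    · exact h
  intro t ht
  have := fz t ht
  rw [z0, w0] at this
  simp only [hz] at this
  linarith

theorem statement0 (T a m : ℝ) (hT : 0 < T) (ha : 0 ≤ a) (hm : 0 < m)
    (hm' : m < Real.sqrt ((Real.pi / T) ^ 2 + (a / 2) ^ 2)) :
    ∃ G : ℝ → ℝ → ℝ,
      ContinuousOn (fun p : ℝ × ℝ => G p.1 p.2) (Set.Icc 0 T ×ˢ Set.Icc 0 T) ∧
      PropG1 T a m G ∧
      (∀ t ∈ Set.Icc 0 T, ∀ s ∈ Set.Icc 0 T, 0 < G t s) ∧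
      (∀ t ∈ Set.Icc 0 T, (∫ s in (0:ℝ)..T, G t s) = 1 / m ^ 2) ∧
      ∃ c : ℝ, c ∈ Set.Ioo (0:ℝ) 1 ∧
        ∀ t ∈ Set.Icc 0 T, ∀ s ∈ Set.Icc 0 T,
          G s s ≤ G t s ∧ c * G t s ≤ G s s := by
  obtain ⟨k, hk⟩ : ∃ k, k = m ^ 2 - (a / 2) ^ 2 := ⟨_, rfl⟩
  obtain ⟨P, Q, hP, hQ, P0, Q0, Pa, Qa, Pp, Pq, hD⟩ := exPQ T a m hT ha hm hm' k hk
  have m0 : (0:ℝ) ∈ Icc 0 T := ⟨le_rfl, hT.le⟩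
  have mT : T ∈ Icc 0 T := ⟨hT.le, le_rfl⟩
  have cP : Continuous P := continuous_iff_continuousAt.2 fun t => (hP t).continuousAt
  have cQ : Continuous Q := continuous_iff_continuousAt.2 fun t => (hQ t).continuousAt
  have I1 : ∀ t, P t * Q (-t) + Q t * P (-t) = 0 := by
    intro t; rw [← Pa, add_neg_cancel, P0]
  have I2 : ∀ t, Q t * Q (-t) - k * (P t * P (-t)) = 1 := by
    intro t; rw [← Qa, add_neg_cancel, Q0]
  obtain ⟨D, hDd⟩ : ∃ D, D = 1 - 2 * Q T + Q T ^ 2 + k * P T ^ 2 := ⟨_, rfl⟩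
  have hDp : 0 < D := hDd ▸ hD
  obtain ⟨α, hα⟩ : ∃ α, α = (1 - Q T) / D := ⟨_, rfl⟩
  obtain ⟨β, hβ⟩ : ∃ β, β = P T / D := ⟨_, rfl⟩
  have hβp : 0 < β := by rw [hβ]; exact div_pos (Pp T hT le_rfl) hDp
  have R1 : α * Q T - k * (β * P T) = α - 1 := by
    rw [hα, hβ]; field_simp; rw [hDd]; ring
  have R2 : α * P T + β * Q T = β := by
    rw [hα, hβ]; field_simp; ring
  set φ : ℝ → ℝ := fun r => α * P r + β * Q r with hφ
  have cφ : Continuous φ := by fun_prop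
  have φT : ∀ r, φ (r + T) = φ r - P r := by
    intro r
    simp only [hφ]
    rw [Pa, Qa]
    linear_combination P r * R1 + Q r * R2
  have φ0 : φ 0 = β := by simp [hφ, P0, Q0]
  have φTT : φ T = β := by have := φT 0; rw [zero_add, P0, φ0] at this; linarith
  have φpos : ∀ r ∈ Icc 0 T, 0 < φ r := by
    intro r hr
    rcases hr.1.eq_or_lt with h | h
    · rw [← h, φ0]; exact hβp
    rcases hr.2.eq_or_lt with h' | h'
    · rw [h', φTT]; exact hβp
    have : φ r = (P r + (P T * Q r - Q T * P r)) / D := by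
      simp only [hφ]; rw [hα, hβ]; field_simp; ring
    rw [this]
    exact div_pos (add_pos (Pp r h hr.2) (Pq r h h')) hDp
  set φ1 : ℝ → ℝ := fun r => α * (-(a / 2) * P r + Q r) + β * (-(a / 2) * Q r - k * P r) with hφ1
  have dφ : ∀ r, HasDerivAt φ (φ1 r) r := fun r => ((hP r).const_mul α).add ((hQ r).const_mul β)
  have dφ1 : ∀ r, HasDerivAt φ1 (- a * φ1 r - m ^ 2 * φ r) r := by
    intro r
    refine HasDerivAt.congr_deriv (((((hP r).const_mul (-(a/2))).add (hQ r)).const_mul α).add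
      ((((hQ r).const_mul (-(a/2))).sub ((hP r).const_mul k)).const_mul β)) ?_
    simp only [hφ, hφ1]
    rw [show m ^ 2 = k + (a/2)^2 by rw [hk]; ring]
    ring
  have anti : AntitoneOn (fun r => Real.exp (a * r) * φ1 r) (Icc 0 T) := by
    have dd : ∀ r, HasDerivAt (fun r => Real.exp (a * r) * φ1 r)
        (-(Real.exp (a * r) * (m ^ 2 * φ r))) r := by
      intro r
      refine HasDerivAt.congr_deriv ((((hasDerivAt_id' r).const_mul a).exp).mul (dφ1 r)) ?_
      simp; ring
    apply antitoneOn_of_deriv_nonpos (convex_Icc 0 T)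
    · exact fun r _ => (dd r).continuousAt.continuousWithinAt
    · exact fun r _ => (dd r).differentiableAt.differentiableWithinAt
    · intro r hr
      rw [(dd r).deriv]
      have := φpos r (interior_subset hr)
      have : 0 < Real.exp (a * r) * (m ^ 2 * φ r) := by positivity
      linarith
  have φmin : ∀ r ∈ Icc 0 T, β ≤ φ r := by
    intro r hr
    rcases hr.1.eq_or_lt with h | h
    · rw [← h, φ0]
    rcases hr.2.eq_or_lt with h' | h'
    · rw [h', φTT]
    by_contra! hlt
    obtain ⟨x1, hx1, e1⟩ := exists_hasDerivAt_eq_slope φ φ1 h cφ.continuousOn (fun x _ => dφ x)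
    obtain ⟨x2, hx2, e2⟩ := exists_hasDerivAt_eq_slope φ φ1 h' cφ.continuousOn (fun x _ => dφ x)
    have n1 : φ1 x1 < 0 := by
      rw [e1, φ0]; exact div_neg_of_neg_of_pos (by linarith) (by linarith)
    have n2 : 0 < φ1 x2 := by
      rw [e2, φTT]; exact div_pos (by linarith) (by linarith)
    have := anti (a := x1) (b := x2) ⟨hx1.1.le, by linarith [hx1.2]⟩ ⟨by linarith [hx2.1], hx2.2.le⟩
      (by linarith [hx1.2, hx2.1])
    dsimp only at this
    have h3 := mul_pos (Real.exp_pos (a * x2)) n2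
    have h4 := mul_neg_of_pos_of_neg (Real.exp_pos (a * x1)) n1
    linarith
  obtain ⟨G, hG⟩ : ∃ G : ℝ → ℝ → ℝ, G = fun t s => if s ≤ t then φ (t - s) else φ (t - s) - P (t - s) :=
    ⟨_, rfl⟩
  have Gle : ∀ t s, s ≤ t → G t s = φ (t - s) := fun t s h => by rw [hG]; simp [h]
  have Gge : ∀ t s, t ≤ s → G t s = φ (t - s) - P (t - s) := by
    intro t s h
    rw [hG]
    rcases h.eq_or_lt with h | h
    · subst h; simp [P0]
    · simp [not_le.2 h]
  have Gr : ∀ t ∈ Icc 0 T, ∀ s ∈ Icc 0 T, ∃ r ∈ Icc 0 T, G t s = φ r := by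
    intro t ht s hs
    rcases le_total s t with h | h
    · exact ⟨t - s, ⟨by linarith, by linarith [hs.1, ht.2]⟩, Gle t s h⟩
    · exact ⟨t - s + T, ⟨by linarith [hs.2, ht.1], by linarith⟩, by rw [Gge t s h, φT]⟩
  have Gss : ∀ s, G s s = β := fun s => by rw [Gle s s le_rfl, sub_self, φ0]
  have Gc : Continuous (fun p : ℝ × ℝ => G p.1 p.2) := by
    rw [hG]
    apply Continuous.if_le (by fun_prop) (by fun_prop) (by fun_prop) (by fun_prop)
    intro p hp
    rw [hp]; simp [P0]
  have G1 : PropG1 T a m G := by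
    intro h hh
    obtain ⟨g, cg, hg⟩ : ∃ g : ℝ → ℝ, Continuous g ∧ ∀ t ∈ Icc 0 T, g t = h t := by
      refine ⟨fun t => h (max 0 (min t T)), ?_, ?_⟩
      · apply hh.comp_continuous (by fun_prop)
        intro t
        exact ⟨le_max_left _ _, max_le hT.le (min_le_right _ _)⟩
      · intro t ht
        simp only
        rw [min_eq_left ht.2, max_eq_right ht.1]
    have cp : Continuous (fun s => Q (-s) * g s) := by fun_prop
    have cq : Continuous (fun s => P (-s) * g s) := by fun_prop
    set Jp : ℝ → ℝ := fun t => ∫ s in (0:ℝ)..t, Q (-s) * g s with hJp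
    set Jq : ℝ → ℝ := fun t => ∫ s in (0:ℝ)..t, P (-s) * g s with hJq
    have dJp : ∀ t, HasDerivAt Jp (Q (-t) * g t) t := fun t => (cp.integral_hasStrictDerivAt 0 t).hasDerivAt
    have dJq : ∀ t, HasDerivAt Jq (P (-t) * g t) t := fun t => (cq.integral_hasStrictDerivAt 0 t).hasDerivAt
    have cJp : Continuous Jp := continuous_iff_continuousAt.2 fun t => (dJp t).continuousAt
    have cJq : Continuous Jq := continuous_iff_continuousAt.2 fun t => (dJq t).continuousAt
    have Jp0 : Jp 0 = 0 := by simp [hJp]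
    have Jq0 : Jq 0 = 0 := by simp [hJq]
    set U : ℝ → ℝ := fun t => (α * Jp T - k * β * Jq T) - (Jp T - Jp t) with hU
    set V : ℝ → ℝ := fun t => (β * Jp T + α * Jq T) - (Jq T - Jq t) with hV
    have dU : ∀ t, HasDerivAt U (Q (-t) * g t) t := by
      intro t
      refine HasDerivAt.congr_deriv ((((dJp t).const_sub (Jp T)).const_sub (α * Jp T - k * β * Jq T))) ?_
      ring
    have dV : ∀ t, HasDerivAt V (P (-t) * g t) t := by
      intro t
      refine HasDerivAt.congr_deriv ((((dJq t).const_sub (Jq T)).const_sub (β * Jp T + α * Jq T))) ?_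
      ring
    have cU : Continuous U := by fun_prop
    have cV : Continuous V := by fun_prop
    set y : ℝ → ℝ := fun t => P t * U t + Q t * V t with hy
    set y1 : ℝ → ℝ := fun t => (-(a / 2) * P t + Q t) * U t + (-(a / 2) * Q t - k * P t) * V t with hy1
    set y2 : ℝ → ℝ := fun t => g t - a * y1 t - m ^ 2 * y t with hy2
    have d1 : ∀ t, HasDerivAt y (y1 t) t := by
      intro t
      refine HasDerivAt.congr_deriv (((hP t).mul (dU t)).add ((hQ t).mul (dV t))) ?_
      simp only [hy1]
      linear_combination g t * I1 t
    have d2 : ∀ t, HasDerivAt y1 (y2 t) t := by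
      intro t
      refine HasDerivAt.congr_deriv (((((hP t).const_mul (-(a/2))).add (hQ t)).mul (dU t)).add
        ((((hQ t).const_mul (-(a/2))).sub ((hP t).const_mul k)).mul (dV t))) ?_
      simp only [hy2, hy1, hy, Pi.add_apply, Pi.sub_apply]
      rw [show m ^ 2 = k + (a/2)^2 by rw [hk]; ring]
      linear_combination g t * I2 t - (a / 2 * g t) * I1 t
    have cy2 : Continuous y2 := by fun_prop
    have key : ∀ t ∈ Icc 0 T, (∫ s in (0:ℝ)..T, G t s * h s) = y t := by
      intro t ht
      have e0 : (∫ s in (0:ℝ)..T, G t s * h s) = ∫ s in (0:ℝ)..T, G t s * g s := by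
        apply intervalIntegral.integral_congr
        intro s hs
        rw [uIcc_of_le hT.le] at hs
        simp only [hg s hs]
      have cGt : Continuous (fun s => G t s * g s) := by
        have : Continuous (fun s => G t s) := Gc.comp (by fun_prop : Continuous (fun s : ℝ => (t, s)))
        fun_prop
      have lin : ∀ (A B b c : ℝ), (∫ s in b..c, (A * (Q (-s) * g s) + B * (P (-s) * g s)))
          = A * (Jp c - Jp b) + B * (Jq c - Jq b) := by
        intro A B b c
        rw [intervalIntegral.integral_add ((cp.const_mul A).intervalIntegrable _ _)
          ((cq.const_mul B).intervalIntegrable _ _), intervalIntegral.integral_const_mul,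
          intervalIntegral.integral_const_mul]
        simp only [hJp, hJq]
        rw [intervalIntegral.integral_interval_sub_left (cp.intervalIntegrable _ _) (cp.intervalIntegrable _ _),
          intervalIntegral.integral_interval_sub_left (cq.intervalIntegrable _ _) (cq.intervalIntegrable _ _)]
      have e1 : (∫ s in (0:ℝ)..t, G t s * g s) = ∫ s in (0:ℝ)..t,
          ((α * P t + β * Q t) * (Q (-s) * g s) + (α * Q t - k * β * P t) * (P (-s) * g s)) := by
        apply intervalIntegral.integral_congr
        intro s hs
        rw [uIcc_of_le ht.1] at hs
        simp only [Gle t s hs.2, hφ]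
        rw [sub_eq_add_neg, Pa, Qa]; ring
      have e2 : (∫ s in t..T, G t s * g s) = ∫ s in t..T,
          ((α * P t + β * Q t - P t) * (Q (-s) * g s) + (α * Q t - k * β * P t - Q t) * (P (-s) * g s)) := by
        apply intervalIntegral.integral_congr
        intro s hs
        rw [uIcc_of_le ht.2] at hs
        simp only [Gge t s hs.1, hφ]
        rw [sub_eq_add_neg t s, Pa, Qa]; ring
      rw [e0, ← intervalIntegral.integral_add_adjacent_intervals (cGt.intervalIntegrable 0 t)
        (cGt.intervalIntegrable t T), e1, e2, lin, lin, Jp0, Jq0]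
      simp only [hy, hU, hV]
      ring
    have sol : IsLinSol T a m h (fun t => ∫ s in (0:ℝ)..T, G t s * h s) := by
      apply isLinSol_of T a m hT h _ y y1 y2 key d1 d2 cy2
      · intro t ht
        rw [← hg t ht]; simp only [hy2]; ring
      · simp only [hy, hU, hV, P0, Q0, Jp0, Jq0]
        linear_combination (-Jp T) * R2 - Jq T * R1
      · simp only [hy1, hU, hV, P0, Q0, Jp0, Jq0]
        linear_combination (a / 2) * (Jp T * R2 + Jq T * R1) - Jp T * R1 + k * Jq T * R2
    refine ⟨sol, ?_⟩
    intro x hx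
    exact uniq T a m k hT hk P Q hP hQ P0 Q0 Pa Qa hD h x _ hx sol
  refine ⟨G, Gc.continuousOn, G1, ?_, ?_, ?_⟩
  · intro t ht s hs
    obtain ⟨r, hr, e⟩ := Gr t ht s hs
    rw [e]; exact φpos r hr
  · intro t ht
    have := (G1 (fun _ => 1) continuousOn_const).2 (fun _ => 1 / m ^ 2) (by
      apply isLinSol_of T a m hT _ _ (fun _ => 1 / m ^ 2) (fun _ => 0) (fun _ => 0) (fun _ _ => rfl)
        (fun t => hasDerivAt_const t _) (fun t => hasDerivAt_const t _) continuous_const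
      · intro t _
        field_simp; ring
      · rfl
      · rfl) t ht
    simp only [mul_one] at this
    exact this.symm
  · obtain ⟨M, hM⟩ := (isCompact_Icc (a := (0:ℝ)) (b := T)).bddAbove_image cφ.continuousOn
    have hM' : ∀ r ∈ Icc 0 T, φ r ≤ M := fun r hr => hM ⟨r, hr, rfl⟩
    have hβM : β ≤ M := φ0 ▸ hM' 0 m0
    have hMp : 0 < M := by linarith
    refine ⟨β / (2 * M), ⟨by positivity, ?_⟩, ?_⟩
    · rw [div_lt_one (by positivity)]; linarith
    · intro t ht s hs
      obtain ⟨r, hr, e⟩ := Gr t ht s hs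
      rw [Gss, e]
      refine ⟨φmin r hr, ?_⟩
      rw [div_mul_eq_mul_div, div_le_iff₀ (by positivity)]
      have := hM' r hr
      nlinarith
end

section
/- Assume (H0): T>0, a≥0, r,s:[0,T]→ℝ continuous and 0<α<β<1; and (H1): there are m>0, R₂>0 and R₁∈(0,R₂) such that m²<(π/T)²+(a/2)² and f_m(t,x)≥0 for all t∈[0,T] and x∈[c_m R₁,R₂], where f_m(t,x)=r(t)x^α−s(t)x^β+m²x. Let G_m:[0,T]×[0,T]→ℝ be continuous with G_m>0 on [0,T]² and G_m(t,s) ≥ G_m(s,s) ≥ c_m G_m(t,s) for all (t,s), where c_m∈(0,1). Let f̃:[0,T]×[0,R₂]→ℝ be continuous, nonnegative, and equal to f_m on [0,T]×[c_m R₁,R₂], and define F̃x(t)=∫₀ᵀ G_m(t,s) f̃(s,x(s)) ds. Assume (H2): there is a continuous g₁:[0,T]→ℝ with f_m(t,x) ≤ g₁(t) for all t∈[0,T] and x∈[c_m R₂,R₂]; set δ(t)=∫₀ᵀ G_m(t,s) g₁(s) ds and assume either (H3) min_{t∈[0,T]} δ(t) ≤ c_m R₂ or (H4) max_{t∈[0,T]}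 δ(t) ≤ R₂. Then there do not exist λ>1 and x in the cone P = {x∈C([0,T],ℝ) : x(t) ≥ c_m‖x‖ for all t∈[0,T]} with ‖x‖=R₂ such that F̃x = λx. -/
open Set Real

theorem statement6 (T a m α β cm R₁ R₂ : ℝ) (r s g₁ : ℝ → ℝ)
    (hT : 0 < T) (ha : 0 ≤ a)
    (hr : ContinuousOn r (Set.Icc 0 T)) (hs : ContinuousOn s (Set.Icc 0 T))
    (hα : 0 < α) (hαβ : α < β) (hβ : β < 1)
    (hm : 0 < m) (hR₁ : 0 < R₁) (hR₁₂ : R₁ < R₂)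
    (hm' : m ^ 2 < (Real.pi / T) ^ 2 + (a / 2) ^ 2)
    (hcm : cm ∈ Set.Ioo (0:ℝ) 1)
    (hH1 : ∀ t ∈ Set.Icc 0 T, ∀ x ∈ Set.Icc (cm * R₁) R₂,
      0 ≤ r t * x ^ α - s t * x ^ β + m ^ 2 * x)
    (G : ℝ → ℝ → ℝ)
    (hGc : ContinuousOn (fun p : ℝ × ℝ => G p.1 p.2) (Set.Icc 0 T ×ˢ Set.Icc 0 T))
    (hGpos : ∀ t ∈ Set.Icc 0 T, ∀ u ∈ Set.Icc 0 T, 0 < G t u)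
    (hG4 : ∀ t ∈ Set.Icc 0 T, ∀ u ∈ Set.Icc 0 T, G u u ≤ G t u ∧ cm * G t u ≤ G u u)
    (ftil : ℝ → ℝ → ℝ)
    (hftc : ContinuousOn (fun p : ℝ × ℝ => ftil p.1 p.2) (Set.Icc 0 T ×ˢ Set.Icc 0 R₂))
    (hftnn : ∀ t ∈ Set.Icc 0 T, ∀ x ∈ Set.Icc (0:ℝ) R₂, 0 ≤ ftil t x)
    (hfteq : ∀ t ∈ Set.Icc 0 T, ∀ x ∈ Set.Icc (cm * R₁) R₂,
      ftil t x = r t * x ^ α - s t * x ^ β + m ^ 2 * x)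
    (hg₁c : ContinuousOn g₁ (Set.Icc 0 T))
    (hH2 : ∀ t ∈ Set.Icc 0 T, ∀ x ∈ Set.Icc (cm * R₂) R₂,
      r t * x ^ α - s t * x ^ β + m ^ 2 * x ≤ g₁ t)
    (hH34 :
      sInf ((fun t => ∫ u in (0:ℝ)..T, G t u * g₁ u) '' Set.Icc 0 T) ≤ cm * R₂ ∨
      sSup ((fun t => ∫ u in (0:ℝ)..T, G t u * g₁ u) '' Set.Icc 0 T) ≤ R₂) :
    ¬ ∃ (lam : ℝ) (x : C(Set.Icc (0:ℝ) T, ℝ)),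
        1 < lam ∧ (∀ t : Set.Icc (0:ℝ) T, cm * ‖x‖ ≤ x t) ∧ ‖x‖ = R₂ ∧
        ∀ t : Set.Icc (0:ℝ) T,
          (∫ u in (0:ℝ)..T, G (t : ℝ) u * ftil u (Set.IccExtend hT.le x u)) =
            lam * x t := by
  rintro ⟨lam, x, hlam, hx, hxn, heq⟩
  obtain ⟨hc0, hc1⟩ := hcm
  have hR₂ : 0 < R₂ := hR₁.trans hR₁₂
  have hcR : 0 < cm * R₂ := mul_pos hc0 hR₂
  have hcRR : cm * R₁ ≤ cm * R₂ := mul_le_mul_of_nonneg_left hR₁₂.le hc0.le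
  have hcR2 : cm * R₂ ≤ R₂ := by nlinarith
  rw [hxn] at hx
  have hxle : ∀ t, x t ≤ R₂ := fun t => by
    rw [← hxn]; exact (le_abs_self _).trans (x.norm_coe_le_norm t)
  have hg0 : ∀ u ∈ Set.Icc 0 T, 0 ≤ g₁ u := fun u hu =>
    (hH1 u hu R₂ ⟨hcRR.trans hcR2, le_rfl⟩).trans (hH2 u hu R₂ ⟨hcR2, le_rfl⟩)
  have huI : Set.uIcc 0 T = Set.Icc 0 T := Set.uIcc_of_le hT.le
  have hGt : ∀ t ∈ Set.Icc 0 T, ContinuousOn (fun u => G t u) (Set.Icc 0 T) := fun t ht =>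
    hGc.comp (f := fun u => (t, u)) (by fun_prop) (fun u hu => ⟨ht, hu⟩)
  have hGd : ContinuousOn (fun u => G u u) (Set.Icc 0 T) :=
    hGc.comp (f := fun u => (u, u)) (by fun_prop) (fun u hu => ⟨hu, hu⟩)
  have hxc : Continuous (Set.IccExtend hT.le x) := x.continuous.Icc_extend'
  have hxE : ∀ u, Set.IccExtend hT.le x u ∈ Set.Icc (cm * R₂) R₂ := fun u =>
    ⟨hx _, hxle _⟩
  have hfc : ContinuousOn (fun u => ftil u (Set.IccExtend hT.le x u)) (Set.Icc 0 T) :=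
    hftc.comp (f := fun u => (u, Set.IccExtend hT.le x u)) (by fun_prop)
      (fun u hu => ⟨hu, hcR.le.trans (hxE u).1, (hxE u).2⟩)
  have hI1 : ∀ t ∈ Set.Icc 0 T, IntervalIntegrable (fun u => G t u * g₁ u)
      MeasureTheory.volume 0 T := fun t ht =>
    ContinuousOn.intervalIntegrable (by rw [huI]; exact (hGt t ht).mul hg₁c)
  have hkey : ∀ t : Set.Icc (0:ℝ) T,
      lam * x t ≤ ∫ u in (0:ℝ)..T, G (t : ℝ) u * g₁ u := fun t => by
    rw [← heq t]
    refine intervalIntegral.integral_mono_on hT.le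
      (ContinuousOn.intervalIntegrable (by rw [huI]; exact (hGt t t.2).mul hfc))
      (hI1 t t.2) (fun u hu => ?_)
    refine mul_le_mul_of_nonneg_left ?_ (hGpos t t.2 u hu).le
    rw [hfteq u hu _ ⟨hcRR.trans (hxE u).1, (hxE u).2⟩]
    exact hH2 u hu _ (hxE u)
  rcases hH34 with h | h
  · have h2 : lam * (cm * R₂) ≤
        sInf ((fun t => ∫ u in (0:ℝ)..T, G t u * g₁ u) '' Set.Icc 0 T) := by
      refine le_csInf ⟨_, Set.mem_image_of_mem _ ⟨le_rfl, hT.le⟩⟩ ?_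
      rintro _ ⟨t, ht, rfl⟩
      exact (mul_le_mul_of_nonneg_left (hx ⟨t, ht⟩) (by linarith)).trans (hkey ⟨t, ht⟩)
    nlinarith
  · have hbdd : BddAbove ((fun t => ∫ u in (0:ℝ)..T, G t u * g₁ u) '' Set.Icc 0 T) := by
      refine ⟨∫ u in (0:ℝ)..T, G u u / cm * g₁ u, ?_⟩
      rintro _ ⟨t, ht, rfl⟩
      refine intervalIntegral.integral_mono_on hT.le (hI1 t ht)
        (ContinuousOn.intervalIntegrable (by
          rw [huI]; exact (hGd.div_const cm).mul hg₁c)) (fun u hu => ?_)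
      refine mul_le_mul_of_nonneg_right ?_ (hg0 u hu)
      rw [le_div_iff₀ hc0, mul_comm]
      exact (hG4 t ht u hu).2
    have h3 : ∀ t, x t ≤ R₂ / lam := fun t => by
      rw [le_div_iff₀ (by linarith), mul_comm]
      exact (hkey t).trans ((le_csSup hbdd ⟨t, t.2, rfl⟩).trans h)
    have h4 : ‖x‖ ≤ R₂ / lam := by
      refine (ContinuousMap.norm_le _ (by positivity)).2 (fun t => ?_)
      rw [Real.norm_of_nonneg (hcR.le.trans (hx t))]
      exact h3 t
    rw [hxn, le_div_iff₀ (by linarith)] at h4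
    nlinarith
end

section
/- Assume (H0): T>0, a≥0, r,s:[0,T]→ℝ continuous and 0<α<β<1; and (H1): there are m>0, R₂>0 and R₁∈(0,R₂) such that m²<(π/T)²+(a/2)² and f_m(t,x)≥0 for all t∈[0,T] and x∈[c_m R₁,R₂], where f_m(t,x)=r(t)x^α−s(t)x^β+m²x. Let G_m:[0,T]×[0,T]→ℝ be continuous such that: for each continuous h:[0,T]→ℝ, t ↦ ∫₀ᵀ G_m(t,s)h(s) ds is the unique solution of x''+a x'+m² x=h, x(0)=x(T), x'(0)=x'(T); G_m>0 on [0,T]²; and G_m(t,s) ≥ G_m(s,s) ≥ c_m G_m(t,s) for all (t,s), where c_m∈(0,1). Assume (H2): there is a continuous g₁ with f_m(t,x) ≤ g₁(t) for t∈[0,T], x∈[c_m R₂,R₂], and, with δ(t)=∫₀ᵀ G_m(t,s) g₁(s) ds, either (H3) min δ ≤ c_m R₂ or (H4) max δ ≤ R₂. Assume (H5): there is a continuous g₀ with f_m(t,x) ≥ g₀(t) ≥ 0 for t∈[0,T], x∈[c_m R₁,R₁], and, with γ(t)=∫₀ᵀ G_m(t,s) g₀(s) ds, either (H6) min γ ≥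 c_m R₁ or (H7) max γ ≥ R₁. Then there exists a twice continuously differentiable x:[0,T]→ℝ with x''(t)+a x'(t) = r(t)x(t)^α − s(t)x(t)^β for all t∈[0,T], x(0)=x(T), x'(0)=x'(T), and c_m R₁ ≤ x(t) ≤ R₂ for all t∈[0,T]. -/
open Set Real

section brouwer
open MeasureTheory Filter Topology

variable {n : ℕ}

lemma bw_det_ne {A : EuclideanSpace ℝ (Fin n) →L[ℝ] EuclideanSpace ℝ (Fin n)} {t : ℝ}
    (h : ‖t • A‖ < 1) : (1 + t • A).det ≠ 0 := by
  intro h0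
  have h1 := LinearMap.bot_lt_ker_of_det_eq_zero (f := ((1 + t • A : EuclideanSpace ℝ (Fin n) →L[ℝ] EuclideanSpace ℝ (Fin n)) : EuclideanSpace ℝ (Fin n) →ₗ[ℝ] EuclideanSpace ℝ (Fin n))) h0
  obtain ⟨v, hv, hv0⟩ := Submodule.exists_mem_ne_zero_of_ne_bot h1.ne'
  have h2 : v + t • A v = 0 := by simpa using hv
  have h3 : ‖v‖ = ‖(t • A) v‖ := by
    have h5 : v = -((t • A) v) := eq_neg_of_add_eq_zero_left h2
    calc ‖v‖ = ‖-((t • A) v)‖ := congrArg norm h5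
      _ = _ := norm_neg _
  have h4 := (t • A).le_opNorm v
  have : 0 < ‖v‖ := norm_pos_iff.mpr hv0
  nlinarith

lemma bw_det_pos {A : EuclideanSpace ℝ (Fin n) →L[ℝ] EuclideanSpace ℝ (Fin n)} {t : ℝ}
    (ht : 0 ≤ t) (h : ‖t • A‖ < 1) : 0 < (1 + t • A).det := by
  by_contra hneg
  push Not at hneg
  have hc : ContinuousOn (fun u : ℝ => (1 + u • A).det) (Icc 0 t) := by
    apply Continuous.continuousOn
    exact ContinuousLinearMap.continuous_det.comp (by fun_prop)
  have := intermediate_value_Icc' ht hc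
  have h0 : (0:ℝ) ∈ Icc ((1 + t • A).det) ((1 + (0:ℝ) • A).det) := by
    refine ⟨hneg, ?_⟩
    simp [ContinuousLinearMap.det]
  obtain ⟨u, hu, hu0⟩ := this h0
  refine bw_det_ne ?_ hu0
  refine lt_of_le_of_lt ?_ h
  rw [norm_smul, norm_smul, Real.norm_of_nonneg hu.1, Real.norm_of_nonneg ht]
  exact mul_le_mul_of_nonneg_right hu.2 (norm_nonneg _)

lemma bw_surj {A : EuclideanSpace ℝ (Fin n) →L[ℝ] EuclideanSpace ℝ (Fin n)}
    (h : A.det ≠ 0) : Function.Surjective A := by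
  have h1 : IsUnit (LinearMap.det (A : EuclideanSpace ℝ (Fin n) →ₗ[ℝ] EuclideanSpace ℝ (Fin n))) :=
    isUnit_iff_ne_zero.mpr h
  have h2 := (LinearMap.isUnit_iff_isUnit_det _).mpr h1
  exact ((Module.End.isUnit_iff _).mp h2).surjective

/-- polynomial dependence of the determinant. -/
lemma bw_det_poly (A : EuclideanSpace ℝ (Fin n) →L[ℝ] EuclideanSpace ℝ (Fin n)) :
    ∃ p : Polynomial ℝ, p.natDegree ≤ n ∧ ∀ t : ℝ, p.eval t = (1 + t • A).det := by
  let b := (EuclideanSpace.basisFun (Fin n) ℝ).toBasis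
  let M := LinearMap.toMatrix b b (A : EuclideanSpace ℝ (Fin n) →ₗ[ℝ] EuclideanSpace ℝ (Fin n))
  refine ⟨((Polynomial.X : Polynomial ℝ) • M.map Polynomial.C + (1 : Matrix (Fin n) (Fin n) ℝ).map Polynomial.C).det, ?_, ?_⟩
  · simpa using Polynomial.natDegree_det_X_add_C_le M 1
  · intro t
    rw [ContinuousLinearMap.det, ← LinearMap.det_toMatrix b, ← Polynomial.coe_evalRingHom, RingHom.map_det]
    congr 1
    ext i j
    simp [M, Matrix.one_apply, LinearMap.toMatrix_apply, Finsupp.single_apply, apply_ite, Polynomial.coe_evalRingHom]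
    by_cases h : i = j
    · subst h
      simp only [if_true]
      ring
    · simp only [h, Ne.symm h, if_false]
      ring

lemma bw_lagrange (N : ℕ) (τ : ℝ) (hτ : 0 < τ) : ∃ (v w : Fin (N+1) → ℝ),
    (∀ i, 0 < v i ∧ v i ≤ τ) ∧ ∑ i, w i = 1 ∧
      ∀ p : Polynomial ℝ, p.natDegree ≤ N → p.eval 1 = ∑ i, w i * p.eval (v i) := by
  let v : Fin (N+1) → ℝ := fun i => τ / ((i:ℕ) + 1)
  have hinj : Function.Injective v := by
    intro i j hij
    simp only [v] at hij
    rw [div_eq_div_iff (by positivity) (by positivity)] at hij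
    have := mul_left_cancel₀ hτ.ne' hij
    have h : ((j:ℕ):ℝ) = ((i:ℕ):ℝ) := by linarith
    exact Fin.ext (by exact_mod_cast h.symm)
  have key : ∀ p : Polynomial ℝ, p.natDegree ≤ N → p.eval 1 = ∑ i, (Lagrange.basis Finset.univ v i).eval 1 * p.eval (v i) := by
    intro p hp
    have h := Lagrange.eq_interpolate (s := Finset.univ) (v := v) (f := p) hinj.injOn (by
      refine lt_of_le_of_lt Polynomial.degree_le_natDegree ?_
      simp
      exact_mod_cast Nat.lt_succ_of_le hp)
    conv_lhs => rw [h]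
    simp [Lagrange.interpolate_apply, Polynomial.eval_finsetSum, mul_comm]
  refine ⟨v, fun i => (Lagrange.basis Finset.univ v i).eval 1, ?_, ?_, key⟩
  · intro i
    refine ⟨by positivity, ?_⟩
    apply div_le_self hτ.le
    have : (0:ℝ) ≤ (i:ℕ) := by positivity
    linarith
  · have := key 1 (by simp)
    simpa using this.symm

lemma bw_no_retraction (r : EuclideanSpace ℝ (Fin n) → EuclideanSpace ℝ (Fin n))
    (hr : ∀ x ∈ Metric.closedBall (0 : EuclideanSpace ℝ (Fin n)) 1, ContDiffAt ℝ 1 r x)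
    (hr1 : ∀ x ∈ Metric.closedBall (0 : EuclideanSpace ℝ (Fin n)) 1, ‖r x‖ = 1)
    (hr2 : ∀ x, ‖x‖ = 1 → r x = x) : False := by
  set B := Metric.closedBall (0 : EuclideanSpace ℝ (Fin n)) 1 with hB
  set U := Metric.ball (0 : EuclideanSpace ℝ (Fin n)) 1 with hU
  have hUB : U ⊆ B := Metric.ball_subset_closedBall
  have hBc : IsCompact B := isCompact_closedBall _ _
  let g := fun x => r x - x
  have hg : ∀ x ∈ B, ContDiffAt ℝ 1 g x := fun x hx => (hr x hx).sub contDiffAt_id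
  obtain ⟨K, hK⟩ := ContDiffOn.exists_lipschitzOnWith (s := B) (f := g) (n := 1)
    (fun x hx => (hg x hx).contDiffWithinAt) one_ne_zero (convex_closedBall _ _) hBc
  have hgd : ∀ x ∈ B, HasStrictFDerivAt g (fderiv ℝ g x) x :=
    fun x hx => (hg x hx).hasStrictFDerivAt one_ne_zero
  have hgK : ∀ x ∈ U, ‖fderiv ℝ g x‖ ≤ K := fun x hx =>
    norm_fderiv_le_of_lipschitzOn ℝ (Metric.isOpen_ball.mem_nhds hx) (hK.mono hUB)
  have hgc : ContinuousOn (fderiv ℝ g) B := fun x hx =>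
    ((hg x hx).fderiv_right (m := 0) (by simp)).continuousAt.continuousWithinAt
  have hint : ∀ t : ℝ, IntegrableOn (fun x => (1 + t • fderiv ℝ g x).det) U := by
    intro t
    refine IntegrableOn.mono_set ?_ hUB
    refine ContinuousOn.integrableOn_compact hBc ?_
    exact ContinuousLinearMap.continuous_det.comp_continuousOn (by fun_prop)
  let τ : ℝ := 1 / (K + 2)
  have hτ : 0 < τ := by positivity
  have hτ1 : τ < 1 := by
    rw [div_lt_one (by positivity)]
    have := K.coe_nonneg
    linarith
  have hτK : τ * K < 1 := by
    rw [div_mul_eq_mul_div, div_lt_one (by positivity)]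
    linarith
  have main : ∀ t : ℝ, 0 < t → t ≤ τ → ∫ x in U, (1 + t • fderiv ℝ g x).det = volume.real U := by
    intro t ht0 htτ
    have ht1 : t < 1 := htτ.trans_lt hτ1
    have htK : t * K < 1 := lt_of_le_of_lt (mul_le_mul_of_nonneg_right htτ K.coe_nonneg) hτK
    let f := fun x => x + t • g x
    have hfd : ∀ x ∈ B, HasStrictFDerivAt f (1 + t • fderiv ℝ g x) x := fun x hx =>
      (hasStrictFDerivAt_id x).add ((hgd x hx).const_smul t)
    have hnorm : ∀ x ∈ U, ‖t • fderiv ℝ g x‖ < 1 := by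
      intro x hx
      rw [norm_smul, Real.norm_of_nonneg ht0.le]
      exact lt_of_le_of_lt (mul_le_mul_of_nonneg_left (hgK x hx) ht0.le) htK
    have hinj : InjOn f B := by
      intro x hx y hy hxy
      have h1 : x - y = t • (g y - g x) := by
        simp only [f] at hxy
        rw [smul_sub, sub_eq_sub_iff_add_eq_add, hxy]; abel
      have h2 : ‖x - y‖ ≤ t * K * ‖x - y‖ := by
        calc ‖x - y‖ = t * ‖g y - g x‖ := by rw [h1, norm_smul, Real.norm_of_nonneg ht0.le]
          _ ≤ t * (K * ‖y - x‖) := mul_le_mul_of_nonneg_left (hK.norm_sub_le hy hx) ht0.le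
          _ = _ := by rw [norm_sub_rev]; ring
      have h3 : ‖x - y‖ = 0 := by
        have := norm_nonneg (x - y)
        nlinarith
      exact sub_eq_zero.mp (norm_eq_zero.mp h3)
    have hfU : ∀ x ∈ U, f x ∈ U := by
      intro x hx
      have hx' : ‖x‖ < 1 := by simpa [hU] using hx
      have : f x = (1 - t) • x + t • r x := by
        simp only [f, g]; module
      simp only [hU, mem_ball_zero_iff]
      rw [this]
      calc _ ≤ (1 - t) * ‖x‖ + t * ‖r x‖ := by
            refine (norm_add_le _ _).trans ?_
            rw [norm_smul, norm_smul, Real.norm_of_nonneg ht0.le, Real.norm_of_nonneg (by linarith)]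
        _ < 1 := by rw [hr1 x (hUB hx)]; nlinarith
    have himg : f '' U = U := by
      apply Subset.antisymm
      · rintro _ ⟨x, hx, rfl⟩; exact hfU x hx
      · have hopen : IsOpen (f '' U) := by
          rw [isOpen_iff_mem_nhds]
          rintro _ ⟨x, hx, rfl⟩
          have hsurj : (1 + t • fderiv ℝ g x : EuclideanSpace ℝ (Fin n) →L[ℝ] EuclideanSpace ℝ (Fin n)).range = ⊤ := by
            exact LinearMap.range_eq_top.mpr (bw_surj (bw_det_ne (hnorm x hx)))
          rw [← (hfd x (hUB hx)).map_nhds_eq_of_surj hsurj]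
          exact image_mem_map (Metric.isOpen_ball.mem_nhds hx)
        have hcomp : IsCompact (f '' B) := hBc.image_of_continuousOn
          (fun x hx => (hfd x hx).hasFDerivAt.continuousAt.continuousWithinAt)
        have hfB : ∀ x ∈ B, x ∉ U → f x = x := by
          intro x hx hxU
          have : ‖x‖ = 1 := by
            simp [hB, hU] at hx hxU
            linarith
          simp [f, g, hr2 x this]
        refine IsPreconnected.subset_left_of_subset_union hopen hcomp.isClosed.isOpen_compl
          ?_ ?_ ?_ (convex_ball _ _).isPreconnected
        · exact disjoint_compl_right_iff_subset.mpr (image_mono hUB)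
        · intro y hy
          by_cases h : y ∈ f '' B
          · left
            obtain ⟨x, hx, rfl⟩ := h
            by_cases hxU : x ∈ U
            · exact ⟨x, hxU, rfl⟩
            · rw [hfB x hx hxU] at hy; exact absurd hy hxU
          · right; exact h
        · have h0 : (0 : EuclideanSpace ℝ (Fin n)) ∈ U := by simp [hU]
          exact ⟨f 0, hfU _ h0, mem_image_of_mem _ h0⟩
    have := integral_image_eq_integral_abs_det_fderiv_smul volume (s := U) (f := f) (f' := fun x => 1 + t • fderiv ℝ g x) Metric.isOpen_ball.measurableSet
      (fun x hx => (hfd x (hUB hx)).hasFDerivAt.hasFDerivWithinAt) (hinj.mono hUB) (fun _ => (1:ℝ))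
    rw [himg] at this
    simp only [smul_eq_mul, mul_one, setIntegral_const] at this
    rw [this]
    refine setIntegral_congr_fun Metric.isOpen_ball.measurableSet (fun x hx => ?_)
    exact (abs_of_pos (bw_det_pos ht0.le (hnorm x hx))).symm
  obtain ⟨v, w, hv, hw, hvw⟩ := bw_lagrange n τ hτ
  have hdet : ∀ x, (1 + (1:ℝ) • fderiv ℝ g x).det = ∑ i, w i * (1 + v i • fderiv ℝ g x).det := by
    intro x
    obtain ⟨p, hp, hp2⟩ := bw_det_poly (fderiv ℝ g x)
    rw [← hp2, hvw p hp]
    simp [hp2]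
  have h1 : ∫ x in U, (1 + (1:ℝ) • fderiv ℝ g x).det = volume.real U := by
    simp_rw [hdet]
    rw [integral_finsetSum _ (fun i _ => ((hint (v i)).const_mul (w i)))]
    simp_rw [integral_const_mul]
    rw [Finset.sum_congr rfl (fun i _ => by rw [main (v i) (hv i).1 (hv i).2]), ← Finset.sum_mul, hw, one_mul]
  have h2 : ∀ x ∈ U, (1 + (1:ℝ) • fderiv ℝ g x).det = 0 := by
    intro x hx
    have hrd : HasFDerivAt r (1 + (1:ℝ) • fderiv ℝ g x) x := by
      have := (hasFDerivAt_id x).add (hgd x (hUB hx)).hasFDerivAt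
      have e : (id + g) = r := by ext1 y; simp [g]
      rw [e] at this
      rw [one_smul]
      exact this
    by_contra hne
    have hsurj := bw_surj hne
    have hin : HasFDerivAt (fun y => inner ℝ (r y) (r y)) _ x := hrd.inner ℝ hrd
    have hconst : (fun y => inner ℝ (r y) (r y)) =ᶠ[𝓝 x] fun _ => (1:ℝ) := by
      filter_upwards [Metric.isOpen_ball.mem_nhds hx] with y hy
      rw [real_inner_self_eq_norm_sq, hr1 y (hUB hy)]; norm_num
    have h0 := hin.unique ((hasFDerivAt_const (1:ℝ) x).congr_of_eventuallyEq hconst)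
    obtain ⟨u, hu⟩ := hsurj (r x)
    have h00 := congrArg (fun L => L u) h0
    rw [ContinuousLinearMap.comp_apply, ContinuousLinearMap.prod_apply, hu, fderivInnerCLM_apply,
      real_inner_self_eq_norm_sq, hr1 x (hUB hx)] at h00
    norm_num at h00
  rw [setIntegral_congr_fun Metric.isOpen_ball.measurableSet h2] at h1
  have : 0 < volume.real U := by
    rw [Measure.real, ENNReal.toReal_pos_iff]
    exact ⟨Metric.measure_ball_pos _ _ one_pos, measure_ball_lt_top⟩
  simp at h1
  linarith
end brouwer

section brouwer2
open MeasureTheory Filter Topology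
lemma bw_smooth {n : ℕ} (q : EuclideanSpace ℝ (Fin n) → EuclideanSpace ℝ (Fin n))
    (hq : ContDiff ℝ 1 q) (hq1 : ∀ x, ‖q x‖ ≤ 1) (hne : ∀ x, ‖x‖ ≤ 1 → q x ≠ x) : False := by
  let u := fun x => x - q x
  let a := fun x => ‖u x‖ ^ 2
  let b := fun x => inner ℝ x (u x)
  let D := fun x => b x ^ 2 + a x * (1 - ‖x‖ ^ 2)
  let l := fun x => (-b x + √(D x)) / a x
  have hu : ContDiff ℝ 1 u := contDiff_id.sub hq
  have ha : ContDiff ℝ 1 a := hu.norm_sq ℝ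
  have hb : ContDiff ℝ 1 b := contDiff_id.inner ℝ hu
  have hD : ContDiff ℝ 1 D := (hb.pow 2).add (ha.mul (contDiff_const.sub (contDiff_id.norm_sq ℝ)))
  have hapos : ∀ x, ‖x‖ ≤ 1 → 0 < a x := by
    intro x hx
    have : u x ≠ 0 := fun h => hne x hx (sub_eq_zero.mp h).symm
    have := norm_pos_iff.mpr this
    simp only [a]; positivity
  have hab : ∀ x, a x ≤ 2 * b x + (1 - ‖x‖ ^ 2) := by
    intro x
    have h1 : a x = ‖x‖ ^ 2 - 2 * inner ℝ x (q x) + ‖q x‖ ^ 2 := norm_sub_sq_real x (q x)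
    have h2 : b x = ‖x‖ ^ 2 - inner ℝ x (q x) := by
      simp only [b, u]; rw [inner_sub_right, real_inner_self_eq_norm_sq]
    have := hq1 x
    have := norm_nonneg (q x)
    nlinarith
  have hDpos : ∀ x, ‖x‖ ≤ 1 → 0 < D x := by
    intro x hx
    have h1 := hapos x hx
    have h2 := hab x
    rcases hx.lt_or_eq with h | h
    · have : 0 < 1 - ‖x‖ ^ 2 := by have := norm_nonneg x; nlinarith
      have := mul_pos h1 this
      simp only [D]; positivity
    · have : 0 < b x := by rw [h] at h2; linarith
      simp only [D]; rw [h]; simp; positivity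
  refine bw_no_retraction (fun x => x + l x • u x) ?_ ?_ ?_
  · intro x hx
    have hx : ‖x‖ ≤ 1 := by simpa using hx
    have hl : ContDiffAt ℝ 1 l x := (hb.contDiffAt.neg.add (hD.contDiffAt.sqrt (hDpos x hx).ne')).div ha.contDiffAt (hapos x hx).ne'
    exact contDiffAt_id.add (hl.smul hu.contDiffAt)
  · intro x hx
    have hx : ‖x‖ ≤ 1 := by simpa using hx
    have h1 := hapos x hx
    have h3 : √(D x) ^ 2 = b x ^ 2 + a x * (1 - ‖x‖ ^ 2) := Real.sq_sqrt (hDpos x hx).le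
    have hl : l x * a x = -b x + √(D x) := div_mul_cancel₀ _ h1.ne'
    have h2 : ‖x + l x • u x‖ ^ 2 = ‖x‖ ^ 2 + 2 * (l x * b x) + l x ^ 2 * a x := by
      rw [norm_add_sq_real, inner_smul_right, norm_smul, mul_pow, Real.norm_eq_abs, sq_abs]
    have h4 : a x * ‖x + l x • u x‖ ^ 2 = a x * 1 := by
      rw [h2]
      have : √(D x) = l x * a x + b x := by linarith
      rw [this] at h3
      linarith
    have h5 := mul_left_cancel₀ h1.ne' h4
    exact (pow_eq_one_iff_of_nonneg (norm_nonneg _) two_ne_zero).mp h5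
  · intro x hx
    have h1 := hapos x hx.le
    have h2 := hab x
    have hb0 : 0 < b x := by rw [hx] at h2; linarith
    have : D x = b x ^ 2 := by simp only [D]; rw [hx]; simp
    have : l x = 0 := by simp only [l]; rw [this, Real.sqrt_sq hb0.le]; simp
    simp [this]

lemma bw_brouwer {n : ℕ} (f : EuclideanSpace ℝ (Fin n) → EuclideanSpace ℝ (Fin n))
    (hf : Continuous f) (hf1 : ∀ x, ‖f x‖ ≤ 1) : ∃ x, f x = x := by
  by_contra! hne
  obtain ⟨x0, -, hx0⟩ := (isCompact_closedBall (0 : EuclideanSpace ℝ (Fin n)) 1).exists_isMinOn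
    ⟨0, by simp⟩ (f := fun x => ‖f x - x‖) (by fun_prop)
  set d := ‖f x0 - x0‖ with hd
  have hdpos : 0 < d := norm_pos_iff.mpr (sub_ne_zero.mpr (hne x0))
  obtain ⟨p, hp, hpf, -⟩ := hf.exists_contDiff_approx 1 (ε := fun _ => d / 4) continuous_const
    (fun _ => by positivity)
  set e := d / 4 with he
  have hepos : 0 < e := by positivity
  have hp1 : ∀ x, ‖p x‖ ≤ 1 + e := by
    intro x
    have h1 := hpf x
    rw [dist_eq_norm] at h1
    have h2 := norm_add_le (p x - f x) (f x)
    rw [sub_add_cancel] at h2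
    linarith [hf1 x]
  refine bw_smooth (fun x => (1 + e)⁻¹ • p x) (hp.const_smul _) ?_ ?_
  · intro x
    rw [norm_smul, norm_inv, Real.norm_of_nonneg (by positivity), inv_mul_le_iff₀ (by positivity)]
    simpa using hp1 x
  · intro x hx h
    have h1 : d ≤ ‖f x - x‖ := hx0 (by simpa using hx)
    have h2 : p x = (1 + e) • x := by
      have h7 : (1 + e) • ((1 + e)⁻¹ • p x) = (1 + e) • x := congrArg _ h
      rwa [smul_smul, mul_inv_cancel₀ (by positivity), one_smul] at h7
    have h3 : f x - x = -(p x - f x) + e • x := by rw [h2]; module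
    have h4 := hpf x
    rw [dist_eq_norm] at h4
    have h5 := norm_add_le (-(p x - f x)) (e • x)
    rw [← h3, norm_neg, norm_smul, Real.norm_of_nonneg hepos.le] at h5
    nlinarith

lemma bw_simplex {N : ℕ} (hN : 0 < N) (F : (Fin N → ℝ) → (Fin N → ℝ))
    (hF : ContinuousOn F {w | (∀ i, 0 ≤ w i) ∧ ∑ i, w i = 1})
    (hF0 : ∀ w, (∀ i, 0 ≤ w i) ∧ ∑ i, w i = 1 → (∀ i, 0 ≤ F w i) ∧ ∑ i, F w i = 1) :
    ∃ w, ((∀ i, 0 ≤ w i) ∧ ∑ i, w i = 1) ∧ F w = w := by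
  let S : EuclideanSpace ℝ (Fin N) → ℝ := fun w => ∑ i, max (w i) 0
  let ρ : EuclideanSpace ℝ (Fin N) → (Fin N → ℝ) := fun w i =>
    (max (w i) 0 + max (1 - S w) 0 / N) / max (S w) 1
  have hNR : (0:ℝ) < N := by exact_mod_cast hN
  have hρc : Continuous ρ := by
    refine continuous_pi fun i => ?_
    have hS : Continuous S := by fun_prop
    refine Continuous.div (by fun_prop) (by fun_prop) (fun w => ?_)
    exact (lt_of_lt_of_le one_pos (le_max_right _ _)).ne'
  have hρ : ∀ w, (∀ i, 0 ≤ ρ w i) ∧ ∑ i, ρ w i = 1 := by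
    intro w
    refine ⟨fun i => by positivity, ?_⟩
    simp only [ρ]
    rw [← Finset.sum_div, Finset.sum_add_distrib]
    simp only [Finset.sum_const, Finset.card_univ, Fintype.card_fin, nsmul_eq_mul]
    rw [mul_div_cancel₀ _ hNR.ne']
    change (S w + _) / _ = _
    rcases le_total (S w) 1 with h | h
    · rw [max_eq_left (by linarith), max_eq_right h]; ring
    · rw [max_eq_right (by linarith), max_eq_left h]
      rw [add_zero, div_self (by linarith)]
  have hρid : ∀ w : EuclideanSpace ℝ (Fin N), (∀ i, 0 ≤ w i) → ∑ i, w i = 1 → ∀ i, ρ w i = w i := by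
    intro w h0 h1 i
    have : S w = 1 := by
      rw [← h1]; exact Finset.sum_congr rfl fun i _ => max_eq_left (h0 i)
    simp only [ρ, this]
    simp [h0 i]
  obtain ⟨w, hw⟩ := bw_brouwer (fun w => WithLp.toLp 2 (F (ρ w))) (by
      have : Continuous fun w => F (ρ w) := hF.comp_continuous hρc hρ
      exact (PiLp.continuous_toLp 2 _).comp this) (by
      intro w
      obtain ⟨h0, h1⟩ := hF0 _ (hρ w)
      rw [EuclideanSpace.norm_eq, Real.sqrt_le_left (by norm_num), one_pow]
      rw [← h1]
      refine Finset.sum_le_sum fun i _ => ?_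
      have h2 : F (ρ w) i ≤ 1 := by
        rw [← h1]; exact Finset.single_le_sum (fun j _ => h0 j) (Finset.mem_univ i)
      have := h0 i
      simp only [Real.norm_eq_abs, sq_abs]
      nlinarith)
  have hwi : ∀ i, F (ρ w) i = w i := fun i => congrArg (fun z : EuclideanSpace ℝ (Fin N) => z i) hw
  obtain ⟨h0, h1⟩ := hF0 _ (hρ w)
  simp only [hwi] at h0 h1
  have e : ρ w = w := funext (hρid w h0 h1)
  refine ⟨ρ w, hρ w, ?_⟩
  ext i
  rw [hwi, e]

theorem bw_schauder {E : Type*} [NormedAddCommGroup E] [NormedSpace ℝ E] (C : Set E)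
    (hC : IsCompact C) (hconv : Convex ℝ C) (hne : C.Nonempty) (f : E → E)
    (hf : ContinuousOn f C) (hfC : ∀ x ∈ C, f x ∈ C) : ∃ x ∈ C, f x = x := by
  have approx : ∀ ε > 0, ∃ x ∈ C, ‖f x - x‖ ≤ ε := by
    intro ε hε
    obtain ⟨t, htC, htf, hcov⟩ := hC.finite_cover_balls hε
    obtain ⟨N, y, hy⟩ : ∃ (N : ℕ) (y : Fin N → E), range y = t := by
      refine ⟨_, fun i => (htf.toFinset.equivFin.symm i : E), ?_⟩
      ext x
      simp only [mem_range]
      constructor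
      · rintro ⟨i, rfl⟩
        exact htf.mem_toFinset.mp (htf.toFinset.equivFin.symm i).2
      · intro hx
        exact ⟨htf.toFinset.equivFin ⟨x, by simpa using hx⟩, by simp⟩
    have hyC : ∀ i, y i ∈ C := fun i => htC (hy ▸ mem_range_self i)
    have hcov' : ∀ z ∈ C, ∃ i, ‖z - y i‖ < ε := by
      intro z hz
      obtain ⟨x, hx, hzx⟩ := mem_iUnion₂.mp (hcov hz)
      rw [← hy] at hx
      obtain ⟨i, rfl⟩ := hx
      exact ⟨i, by simpa [dist_eq_norm] using hzx⟩
    have hN : 0 < N := by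
      obtain ⟨z, hz⟩ := hne
      obtain ⟨i, -⟩ := hcov' z hz
      exact i.pos
    let X : (Fin N → ℝ) → E := fun w => ∑ i, w i • y i
    let Δ : Set (Fin N → ℝ) := {w | (∀ i, 0 ≤ w i) ∧ ∑ i, w i = 1}
    have hX : ∀ w ∈ Δ, X w ∈ C := fun w hw =>
      hconv.sum_mem (fun i _ => hw.1 i) hw.2 (fun i _ => hyC i)
    have hXc : Continuous X := by fun_prop
    let φ : E → Fin N → ℝ := fun z i => max (ε - ‖z - y i‖) 0
    have hφpos : ∀ z ∈ C, 0 < ∑ i, φ z i := by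
      intro z hz
      obtain ⟨i, hi⟩ := hcov' z hz
      refine Finset.sum_pos' (fun i _ => le_max_right _ _) ⟨i, Finset.mem_univ i, ?_⟩
      exact lt_max_of_lt_left (by linarith)
    obtain ⟨w, hw, hFw⟩ := bw_simplex hN (fun w i => φ (f (X w)) i / ∑ j, φ (f (X w)) j) (by
        have h1 : ContinuousOn (fun w => f (X w)) Δ := hf.comp hXc.continuousOn hX
        have h2 : ∀ i, Continuous fun z => φ z i := fun i => by fun_prop
        refine continuousOn_pi.mpr fun i => ?_
        refine ContinuousOn.div ((h2 i).comp_continuousOn h1) ?_ (fun w hw => (hφpos _ (hfC _ (hX w hw))).ne')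
        exact continuousOn_finsetSum _ fun j _ => (h2 j).comp_continuousOn h1) (by
        intro w hw
        have h := hφpos _ (hfC _ (hX w hw))
        refine ⟨fun i => div_nonneg (le_max_right _ _) h.le, ?_⟩
        rw [← Finset.sum_div, div_self h.ne'])
    refine ⟨X w, hX w hw, ?_⟩
    set z := f (X w) with hz
    have h1 : z - X w = ∑ i, w i • (z - y i) := by
      simp_rw [smul_sub]
      rw [Finset.sum_sub_distrib, ← Finset.sum_smul, hw.2, one_smul]
    rw [h1]
    calc _ ≤ ∑ i, w i * ε := by
          refine (norm_sum_le _ _).trans (Finset.sum_le_sum fun i _ => ?_)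
          rw [norm_smul, Real.norm_of_nonneg (hw.1 i)]
          by_cases hi : ‖z - y i‖ ≤ ε
          · exact mul_le_mul_of_nonneg_left hi (hw.1 i)
          · have : w i = 0 := by
              rw [← hFw]
              simp only [φ]
              rw [max_eq_right (by linarith), zero_div]
            simp [this]
      _ = ε := by rw [← Finset.sum_mul, hw.2, one_mul]
  obtain ⟨x, hx, hmin⟩ := hC.exists_isMinOn hne (f := fun x => ‖f x - x‖)
    (hf.sub continuousOn_id).norm
  refine ⟨x, hx, ?_⟩
  by_contra h
  have hpos : 0 < ‖f x - x‖ := norm_pos_iff.mpr (sub_ne_zero.mpr h)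
  obtain ⟨y, hy, hy2⟩ := approx (‖f x - x‖ / 2) (by positivity)
  have := hmin hy
  simp only [mem_ofPred_eq] at this
  linarith
end brouwer2

section hamm
open MeasureTheory Filter Topology
lemma bw_hammerstein (T M : ℝ) (hT : 0 < T) (hM : 0 ≤ M) (G F : ℝ → ℝ → ℝ)
    (hG : Continuous (Function.uncurry G)) (hF : Continuous (Function.uncurry F))
    (hFM : ∀ u x, |F u x| ≤ M) :
    ∃ y : ℝ → ℝ, Continuous y ∧ ∀ t ∈ Icc 0 T, y t = ∫ u in (0:ℝ)..T, G t u * F u (y u) := by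
  let X := Icc (0:ℝ) T
  let pr : ℝ → X := projIcc 0 T hT.le
  have hpr : Continuous pr := continuous_projIcc
  have hGt : ∀ t, Continuous (G t) := fun t => by fun_prop
  have hjoint : Continuous (Function.uncurry fun (y : C(X, ℝ)) (t : X) =>
      ∫ u in (0:ℝ)..T, G t u * F u (y (pr u))) := by
    have h := intervalIntegral.continuous_parametric_intervalIntegral_of_continuous' (μ := volume)
      (f := fun (p : C(X, ℝ) × X) (u : ℝ) => G p.2 u * F u (p.1 (pr u))) (by
        have h1 : Continuous fun q : (C(X, ℝ) × X) × ℝ => q.1.1 (pr q.2) :=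
          (continuous_fst.fst).eval (hpr.comp continuous_snd)
        have h2 : Continuous fun q : (C(X, ℝ) × X) × ℝ => G q.1.2 q.2 :=
          hG.comp (Continuous.prodMk (continuous_subtype_val.comp continuous_fst.snd) continuous_snd)
        have h3 : Continuous fun q : (C(X, ℝ) × X) × ℝ => F q.2 (q.1.1 (pr q.2)) :=
          hF.comp (Continuous.prodMk continuous_snd h1)
        exact h2.mul h3) 0 T
    exact h
  have hcont : ∀ y : C(X, ℝ), Continuous fun t : X => ∫ u in (0:ℝ)..T, G t u * F u (y (pr u)) :=
    fun y => hjoint.comp (Continuous.prodMk continuous_const continuous_id)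
  let Φ : C(X, ℝ) → C(X, ℝ) := fun y => ⟨_, hcont y⟩
  have hΦ : Continuous Φ := ContinuousMap.continuous_of_continuous_uncurry _ hjoint
  let ω : X → X → ℝ := fun t t' => M * ∫ u in (0:ℝ)..T, |G t u - G t' u|
  have hω : ∀ t, Continuous (ω t) := by
    intro t
    refine continuous_const.mul ?_
    refine intervalIntegral.continuous_parametric_intervalIntegral_of_continuous' (μ := volume)
      (f := fun (t' : X) (u : ℝ) => |G t u - G t' u|) ?_ 0 T
    have h1 : Continuous fun p : X × ℝ => G p.1 p.2 :=
      hG.comp (Continuous.prodMk (continuous_subtype_val.comp continuous_fst) continuous_snd)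
    have h2 : Continuous fun p : X × ℝ => G t p.2 := (hGt t).comp continuous_snd
    exact (h2.sub h1).abs
  let κ : X → ℝ := fun t => M * ∫ u in (0:ℝ)..T, |G t u|
  let C : Set C(X, ℝ) := {y | (∀ t, |y t| ≤ κ t) ∧ ∀ t t', |y t - y t'| ≤ ω t t'}
  have hFy : ∀ y : C(X, ℝ), Continuous fun u => F u (y (pr u)) := fun y => 
    hF.comp (Continuous.prodMk continuous_id (y.continuous.comp hpr))
  have hmap : ∀ y, Φ y ∈ C := by
    intro y
    constructor
    · intro t
      simp only [Φ, κ, ContinuousMap.coe_mk]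
      refine (intervalIntegral.abs_integral_le_integral_abs hT.le).trans ?_
      rw [← intervalIntegral.integral_const_mul]
      refine intervalIntegral.integral_mono_on hT.le ?_ ?_ ?_
      · exact ((hGt t).mul (hFy y)).abs.intervalIntegrable _ _
      · exact (continuous_const.mul (hGt t).abs).intervalIntegrable _ _
      · intro u _
        rw [abs_mul, mul_comm]
        exact mul_le_mul_of_nonneg_right (hFM _ _) (abs_nonneg _)
    · intro t t'
      simp only [Φ, ω, ContinuousMap.coe_mk]
      have hI : ∀ t, IntervalIntegrable (fun u => G t u * F u (y (pr u))) volume 0 T :=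
        fun t => ((hGt t).mul (hFy y)).intervalIntegrable _ _
      rw [← intervalIntegral.integral_sub (hI t) (hI t')]
      refine (intervalIntegral.abs_integral_le_integral_abs hT.le).trans ?_
      rw [← intervalIntegral.integral_const_mul]
      refine intervalIntegral.integral_mono_on hT.le ?_ ?_ ?_
      · exact (((hGt t).mul (hFy y)).sub ((hGt t').mul (hFy y))).abs.intervalIntegrable _ _
      · exact (continuous_const.mul ((hGt t).sub (hGt t')).abs).intervalIntegrable _ _
      · intro u _
        rw [← sub_mul, abs_mul, mul_comm]
        exact mul_le_mul_of_nonneg_right (hFM _ _) (abs_nonneg _)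
  have hωlim : ∀ t, Tendsto (ω t) (𝓝 t) (𝓝 0) := by
    intro t
    have := (hω t).tendsto t
    simpa [ω] using this
  have hcomp : IsCompact C := by
    refine ArzelaAscoli.isCompact_of_equicontinuous C ?_ ?_
    · let P : Set (X → ℝ) := {g | (∀ t, |g t| ≤ κ t) ∧ ∀ t t', |g t - g t'| ≤ ω t t'}
      have hP : ContinuousMap.toFun '' C = P := by
        apply Subset.antisymm
        · rintro _ ⟨y, hy, rfl⟩; exact hy
        · intro g hg
          have hgc : Continuous g := by
            rw [continuous_iff_continuousAt]
            intro t
            rw [ContinuousAt, tendsto_iff_dist_tendsto_zero]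
            refine squeeze_zero (fun _ => dist_nonneg) (fun t' => ?_) (hωlim t)
            rw [dist_comm, Real.dist_eq]; exact hg.2 t t'
          exact ⟨⟨g, hgc⟩, hg, rfl⟩
      rw [hP]
      refine IsCompact.of_isClosed_subset (isCompact_univ_pi fun t : X => isCompact_Icc (a := -κ t) (b := κ t)) ?_ ?_
      · have : P = (⋂ t, {g | |g t| ≤ κ t}) ∩ ⋂ t, ⋂ t', {g | |g t - g t'| ≤ ω t t'} := by
          ext g; simp [P]
        rw [this]
        refine IsClosed.inter (isClosed_iInter fun t => ?_) (isClosed_iInter fun t => isClosed_iInter fun t' => ?_)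
        · exact isClosed_le (by fun_prop) (by fun_prop)
        · exact isClosed_le (by fun_prop) (by fun_prop)
      · intro g hg t _
        exact abs_le.mp (hg.1 t)
    · intro t
      refine Metric.equicontinuousAt_of_continuity_modulus (ω t) (hωlim t) _ ?_
      refine Eventually.of_forall fun t' y => ?_
      rw [Real.dist_eq]; exact y.2.2 t t'
  have hconv : Convex ℝ C := by
    intro y hy z hz a b ha hb hab
    constructor
    · intro t
      have h1 := abs_le.mp (hy.1 t)
      have h2 := abs_le.mp (hz.1 t)
      have e : (a • y + b • z) t = a * y t + b * z t := rfl
      rw [e, abs_le]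
      have hk : κ t = a * κ t + b * κ t := by rw [← add_mul, hab, one_mul]
      constructor <;> nlinarith
    · intro t t'
      have h1 := abs_le.mp (hy.2 t t')
      have h2 := abs_le.mp (hz.2 t t')
      have e : (a • y + b • z) t - (a • y + b • z) t' = a * (y t - y t') + b * (z t - z t') := by
        change (a * y t + b * z t) - (a * y t' + b * z t') = _
        ring
      rw [e, abs_le]
      have hk : ω t t' = a * ω t t' + b * ω t t' := by rw [← add_mul, hab, one_mul]
      constructor <;> nlinarith
  obtain ⟨y, -, hy⟩ := bw_schauder C hcomp hconv ⟨Φ 0, hmap 0⟩ Φ hΦ.continuousOn (fun y _ => hmap y)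
  refine ⟨fun t => y (pr t), y.continuous.comp hpr, ?_⟩
  intro t ht
  have h1 : pr t = ⟨t, ht⟩ := projIcc_of_mem hT.le ht
  have h2 := congrArg (fun z : C(X, ℝ) => z ⟨t, ht⟩) hy
  simp only [h1]
  exact h2.symm
end hamm

theorem statement8 (T a m α β cm R₁ R₂ : ℝ) (r s g₀ g₁ : ℝ → ℝ)
    (hT : 0 < T) (ha : 0 ≤ a)
    (hr : ContinuousOn r (Set.Icc 0 T)) (hs : ContinuousOn s (Set.Icc 0 T))
    (hα : 0 < α) (hαβ : α < β) (hβ : β < 1)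
    (hm : 0 < m) (hR₁ : 0 < R₁) (hR₁₂ : R₁ < R₂)
    (hm' : m ^ 2 < (Real.pi / T) ^ 2 + (a / 2) ^ 2)
    (hcm : cm ∈ Set.Ioo (0:ℝ) 1)
    (hH1 : ∀ t ∈ Set.Icc 0 T, ∀ x ∈ Set.Icc (cm * R₁) R₂,
      0 ≤ r t * x ^ α - s t * x ^ β + m ^ 2 * x)
    (G : ℝ → ℝ → ℝ)
    (hGc : ContinuousOn (fun p : ℝ × ℝ => G p.1 p.2) (Set.Icc 0 T ×ˢ Set.Icc 0 T))
    (hG1 : PropG1 T a m G)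
    (hGpos : ∀ t ∈ Set.Icc 0 T, ∀ u ∈ Set.Icc 0 T, 0 < G t u)
    (hG4 : ∀ t ∈ Set.Icc 0 T, ∀ u ∈ Set.Icc 0 T, G u u ≤ G t u ∧ cm * G t u ≤ G u u)
    (hg₁c : ContinuousOn g₁ (Set.Icc 0 T))
    (hH2 : ∀ t ∈ Set.Icc 0 T, ∀ x ∈ Set.Icc (cm * R₂) R₂,
      r t * x ^ α - s t * x ^ β + m ^ 2 * x ≤ g₁ t)
    (hH34 :
      sInf ((fun t => ∫ u in (0:ℝ)..T, G t u * g₁ u) '' Set.Icc 0 T) ≤ cm * R₂ ∨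
      sSup ((fun t => ∫ u in (0:ℝ)..T, G t u * g₁ u) '' Set.Icc 0 T) ≤ R₂)
    (hg₀c : ContinuousOn g₀ (Set.Icc 0 T))
    (hH5 : ∀ t ∈ Set.Icc 0 T, 0 ≤ g₀ t ∧
      ∀ x ∈ Set.Icc (cm * R₁) R₁, g₀ t ≤ r t * x ^ α - s t * x ^ β + m ^ 2 * x)
    (hH67 :
      cm * R₁ ≤ sInf ((fun t => ∫ u in (0:ℝ)..T, G t u * g₀ u) '' Set.Icc 0 T) ∨
      R₁ ≤ sSup ((fun t => ∫ u in (0:ℝ)..T, G t u * g₀ u) '' Set.Icc 0 T)) :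
    ∃ x : ℝ → ℝ, ContDiffOn ℝ 2 x (Set.Icc 0 T) ∧
      (∀ t ∈ Set.Icc 0 T,
        pd2 T x t + a * pd1 T x t = r t * x t ^ α - s t * x t ^ β) ∧
      x 0 = x T ∧ pd1 T x 0 = pd1 T x T ∧
      ∀ t ∈ Set.Icc 0 T, cm * R₁ ≤ x t ∧ x t ≤ R₂ := by
  obtain ⟨hc0, hc1⟩ := hcm
  have hcR : 0 < cm * R₁ := mul_pos hc0 hR₁
  have hcR1 : cm * R₁ < R₁ := by nlinarith
  have hcR2 : cm * R₂ < R₂ := by nlinarith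
  have hcR12 : cm * R₁ < cm * R₂ := mul_lt_mul_of_pos_left hR₁₂ hc0
  have hR₂ : 0 < R₂ := hR₁.trans hR₁₂
  -- basic properties of the integral operator
  have hGt : ∀ t ∈ Icc 0 T, ContinuousOn (G t) (Icc 0 T) := fun t ht =>
    hGc.comp (f := fun u => (t, u)) (by fun_prop) (fun u hu => ⟨ht, hu⟩)
  have hII : ∀ t ∈ Icc 0 T, ∀ h : ℝ → ℝ, ContinuousOn h (Icc 0 T) →
      IntervalIntegrable (fun u => G t u * h u) MeasureTheory.volume 0 T := fun t ht h hh =>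
    (((hGt t ht).mul hh).congr (fun _ _ => rfl)).intervalIntegrable_of_Icc hT.le
  have hmono : ∀ h k : ℝ → ℝ, ContinuousOn h (Icc 0 T) → ContinuousOn k (Icc 0 T) →
      (∀ u ∈ Icc 0 T, h u ≤ k u) → ∀ t ∈ Icc 0 T,
      (∫ u in (0:ℝ)..T, G t u * h u) ≤ ∫ u in (0:ℝ)..T, G t u * k u := by
    intro h k hh hk hle t ht
    refine intervalIntegral.integral_mono_on hT.le (hII t ht h hh) (hII t ht k hk) fun u hu => ?_
    exact mul_le_mul_of_nonneg_left (hle u hu) (hGpos t ht u hu).le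
  have hcone : ∀ h : ℝ → ℝ, ContinuousOn h (Icc 0 T) → (∀ u ∈ Icc 0 T, 0 ≤ h u) →
      ∀ t ∈ Icc 0 T, ∀ t' ∈ Icc 0 T,
      cm * (∫ u in (0:ℝ)..T, G t u * h u) ≤ ∫ u in (0:ℝ)..T, G t' u * h u := by
    intro h hh h0 t ht t' ht'
    rw [← intervalIntegral.integral_const_mul]
    refine intervalIntegral.integral_mono_on hT.le ((hII t ht h hh).const_mul cm) (hII t' ht' h hh) fun u hu => ?_
    rw [← mul_assoc]
    exact mul_le_mul_of_nonneg_right ((hG4 t ht u hu).2.trans (hG4 t' ht' u hu).1) (h0 u hu)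
  have hcpt : ∀ h : ℝ → ℝ, ContinuousOn h (Icc 0 T) →
      IsCompact ((fun t => ∫ u in (0:ℝ)..T, G t u * h u) '' Icc 0 T) := fun h hh =>
    isCompact_Icc.image_of_continuousOn (hG1 h hh).1.1.continuousOn
  have h0T : (0:ℝ) ∈ Icc 0 T := ⟨le_rfl, hT.le⟩
  -- upper bound for `δ`
  have hδ : ∀ t ∈ Icc 0 T, (∫ u in (0:ℝ)..T, G t u * g₁ u) ≤ R₂ := by
    intro t ht
    rcases hH34 with h | h
    · have hg₁0 : ∀ u ∈ Icc 0 T, 0 ≤ g₁ u := fun u hu =>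
        (hH1 u hu R₂ ⟨by linarith, le_rfl⟩).trans (hH2 u hu R₂ ⟨hcR2.le, le_rfl⟩)
      have h1 : cm * (∫ u in (0:ℝ)..T, G t u * g₁ u) ≤
          sInf ((fun t => ∫ u in (0:ℝ)..T, G t u * g₁ u) '' Icc 0 T) := by
        refine le_csInf ⟨_, mem_image_of_mem _ h0T⟩ ?_
        rintro _ ⟨t', ht', rfl⟩
        exact hcone g₁ hg₁c hg₁0 t ht t' ht'
      exact le_of_mul_le_mul_left (h1.trans h) hc0
    · exact (le_csSup (hcpt g₁ hg₁c).bddAbove (mem_image_of_mem _ ht)).trans h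
  have hγ : ∀ t ∈ Icc 0 T, cm * R₁ ≤ ∫ u in (0:ℝ)..T, G t u * g₀ u := by
    intro t ht
    rcases hH67 with h | h
    · exact h.trans (csInf_le (hcpt g₀ hg₀c).bddBelow (mem_image_of_mem _ ht))
    · have h1 : sSup ((fun t => ∫ u in (0:ℝ)..T, G t u * g₀ u) '' Icc 0 T) ≤
          (∫ u in (0:ℝ)..T, G t u * g₀ u) / cm := by
        refine csSup_le ⟨_, mem_image_of_mem _ h0T⟩ ?_
        rintro _ ⟨t', ht', rfl⟩
        rw [le_div_iff₀ hc0, mul_comm]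
        exact hcone g₀ hg₀c (fun u hu => (hH5 u hu).1) t' ht' t ht
      have h2 := h.trans h1
      rw [le_div_iff₀ hc0] at h2
      linarith
  -- the truncated problem
  let q : ℝ → ℝ := fun u => (projIcc 0 T hT.le u : ℝ)
  have hq : Continuous q := continuous_subtype_val.comp continuous_projIcc
  have hqm : ∀ u, q u ∈ Icc 0 T := fun u => (projIcc 0 T hT.le u).2
  have hqid : ∀ u ∈ Icc 0 T, q u = u := fun u hu => by simp only [q]; rw [projIcc_of_mem hT.le hu]
  let cl : ℝ → ℝ := fun x => max (cm * R₁) (min x R₂)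
  have hcl : Continuous cl := by fun_prop
  have hclm : ∀ x, cl x ∈ Icc (cm * R₁) R₂ := fun x =>
    ⟨le_max_left _ _, max_le (by linarith) (min_le_right _ _)⟩
  have hclid : ∀ x ∈ Icc (cm * R₁) R₂, cl x = x := fun x hx => by
    simp only [cl]; rw [min_eq_left hx.2, max_eq_right hx.1]
  let F : ℝ → ℝ → ℝ := fun u x => r (q u) * cl x ^ α - s (q u) * cl x ^ β + m ^ 2 * cl x
  have hF : Continuous (Function.uncurry F) := by
    have h1 : Continuous fun p : ℝ × ℝ => r (q p.1) :=
      (hr.comp_continuous hq hqm).comp continuous_fst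
    have h2 : Continuous fun p : ℝ × ℝ => s (q p.1) :=
      (hs.comp_continuous hq hqm).comp continuous_fst
    have h3 : Continuous fun p : ℝ × ℝ => cl p.2 := hcl.comp continuous_snd
    exact ((h1.mul (h3.rpow_const fun p => Or.inr hα.le)).sub
      (h2.mul (h3.rpow_const fun p => Or.inr (hα.trans hαβ).le))).add (continuous_const.mul h3)
  obtain ⟨M, hM⟩ := (isCompact_Icc (a := (0:ℝ)) (b := T)).prod (isCompact_Icc (a := cm * R₁) (b := R₂))
    |>.exists_bound_of_continuousOn (f := Function.uncurry F) hF.continuousOn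
  have hFM : ∀ u x, |F u x| ≤ M := by
    intro u x
    have h1 := hM (q u, cl x) ⟨hqm u, hclm x⟩
    have h2 : Function.uncurry F (q u, cl x) = F u x := by
      simp only [Function.uncurry, F]
      rw [hqid _ (hqm u), hclid _ (hclm x)]
    rwa [h2, Real.norm_eq_abs] at h1
  obtain ⟨y, hyc, hy⟩ := bw_hammerstein T M hT ((abs_nonneg _).trans (hFM 0 0))
    (fun t u => G (q t) (q u)) F
    (hGc.comp_continuous (f := fun p : ℝ × ℝ => (q p.1, q p.2)) (by fun_prop) (fun p => ⟨hqm _, hqm _⟩)) hF hFM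
  let h : ℝ → ℝ := fun u => F u (y u)
  have hhc : Continuous h := hF.comp (Continuous.prodMk continuous_id hyc)
  have hy' : ∀ t ∈ Icc 0 T, y t = ∫ u in (0:ℝ)..T, G t u * h u := by
    intro t ht
    rw [hy t ht]
    refine intervalIntegral.integral_congr fun u hu => ?_
    rw [uIcc_of_le hT.le] at hu
    simp only [h, hqid t ht, hqid u hu]
  have hFq : ∀ u ∈ Icc 0 T, h u = r u * cl (y u) ^ α - s u * cl (y u) ^ β + m ^ 2 * cl (y u) := by
    intro u hu
    simp only [h, F, hqid u hu]
  have hh0 : ∀ u ∈ Icc 0 T, 0 ≤ h u := fun u hu => by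
    rw [hFq u hu]; exact hH1 u hu _ (hclm _)
  have hycone : ∀ t ∈ Icc 0 T, ∀ t' ∈ Icc 0 T, cm * y t ≤ y t' := by
    intro t ht t' ht'
    rw [hy' t ht, hy' t' ht']
    exact hcone h hhc.continuousOn hh0 t ht t' ht'
  have hlow : ∀ t ∈ Icc 0 T, cm * R₁ ≤ y t := by
    by_contra! hcon
    obtain ⟨t, ht, hlt⟩ := hcon
    have h1 : ∀ u ∈ Icc 0 T, y u ≤ R₁ := fun u hu =>
      le_of_mul_le_mul_left ((hycone u hu t ht).trans hlt.le) hc0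
    have h2 : ∀ u ∈ Icc 0 T, g₀ u ≤ h u := fun u hu => by
      rw [hFq u hu]
      refine (hH5 u hu).2 _ ⟨(hclm _).1, max_le hcR1.le ((min_le_left _ _).trans (h1 u hu))⟩
    have h3 := hmono g₀ h hg₀c hhc.continuousOn h2 t ht
    rw [← hy' t ht] at h3
    linarith [hγ t ht]
  have hupp : ∀ t ∈ Icc 0 T, y t ≤ R₂ := by
    by_contra! hcon
    obtain ⟨t, ht, hlt⟩ := hcon
    have h1 : ∀ u ∈ Icc 0 T, cm * R₂ ≤ y u := fun u hu =>
      (mul_le_mul_of_nonneg_left hlt.le hc0.le).trans (hycone t ht u hu)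
    have h2 : ∀ u ∈ Icc 0 T, h u ≤ g₁ u := fun u hu => by
      rw [hFq u hu]
      exact hH2 u hu _ ⟨le_max_of_le_right (le_min (h1 u hu) hcR2.le), (hclm _).2⟩
    have h3 := hmono h g₁ hhc.continuousOn hg₁c h2 t ht
    rw [← hy' t ht] at h3
    linarith [hδ t ht]
  obtain ⟨⟨hs1, hs2, hs3, hs4⟩, -⟩ := hG1 h hhc.continuousOn
  refine ⟨fun t => ∫ u in (0:ℝ)..T, G t u * h u, hs1, ?_, hs3, hs4, ?_⟩
  · intro t ht
    have e := hs2 t ht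
    rw [hFq t ht, hclid _ ⟨hlow t ht, hupp t ht⟩, hy' t ht] at e
    linarith
  · intro t ht
    simp only
    rw [← hy' t ht]
    exact ⟨hlow t ht, hupp t ht⟩
end

section
/- Assume (C0): a≥0, 0<μ<1/2, c>0, T>0 and e:[0,T]→ℝ continuous; (C5): e_* > 0; and (C6): there is m>0 such that (c²/(μ e_*²))·((1/c_m^μ)e^* − e_*) ≤ m² < (π/T)²+(a/2)², where c_m∈(0,1) is a constant such that some continuous G_m:[0,T]×[0,T]→ℝ satisfies: for each continuous h:[0,T]→ℝ, t ↦ ∫₀ᵀ G_m(t,s)h(s) ds is the unique solution of x''+a x'+m² x=h, x(0)=x(T), x'(0)=x'(T); G_m>0 on [0,T]²; ∫₀ᵀ G_m(t,s) ds = 1/m² for all t; and G_m(t,s) ≥ G_m(s,s) ≥ c_m G_m(t,s) for all (t,s). Then there exists a twice continuously differentiable x:[0,T]→ℝ with 0 < x(t) ≤ (1/c_m)(e^*/c)^{1/μ} for all t∈[0,T], satisfying x''(t)+a x'(t) = (e(t)/μ)x(t)^{1−2μ} − (c/μ)x(t)^{1−μ} for all t∈[0,T], x(0)=x(T) and x'(0)=x'(T).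 -/
open Set Real

noncomputable def Zs (lam : ℂ) (T : ℝ) (h : ℝ → ℝ) (t : ℝ) : ℂ :=
  Complex.exp (lam * t) * (Complex.exp (lam * T) / (1 - Complex.exp (lam * T)) *
    (∫ s in (0:ℝ)..T, Complex.exp (-lam * s) * (h s : ℂ)) +
    ∫ s in (0:ℝ)..t, Complex.exp (-lam * s) * (h s : ℂ))

theorem Zs_hasDerivAt (lam : ℂ) (T : ℝ) (h : ℝ → ℝ) (hh : Continuous h) (t : ℝ) :
    HasDerivAt (Zs lam T h) (lam * Zs lam T h t + (h t : ℂ)) t := by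
  have hc : Continuous (fun s : ℝ => Complex.exp (-lam * s) * (h s : ℂ)) := by fun_prop
  have h1 := intervalIntegral.integral_hasDerivAt_right (hc.intervalIntegrable 0 t)
    (hc.stronglyMeasurableAtFilter _ _) hc.continuousAt
  have h2 : HasDerivAt (fun t : ℝ => Complex.exp (lam * t)) (Complex.exp (lam * t) * (lam * 1)) t :=
    ((Complex.ofRealCLM.hasDerivAt (x := t)).const_mul lam).cexp
  have h3 := h2.mul (h1.const_add (Complex.exp (lam * T) / (1 - Complex.exp (lam * T)) *
    (∫ s in (0:ℝ)..T, Complex.exp (-lam * s) * (h s : ℂ))))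
  refine h3.congr_deriv ?_
  have : Complex.exp (lam * t) * Complex.exp (-lam * t) = 1 := by
    rw [← Complex.exp_add]; simp
  unfold Zs
  linear_combination ((h t : ℂ)) * this

theorem Zs_per (lam : ℂ) (T : ℝ) (h : ℝ → ℝ) (hne : 1 - Complex.exp (lam * T) ≠ 0) :
    Zs lam T h 0 = Zs lam T h T := by
  unfold Zs
  simp only [intervalIntegral.integral_same]
  field_simp
  simp

theorem Zs_continuous (lam : ℂ) (T : ℝ) (h : ℝ → ℝ) (hm : Measurable h) (C : ℝ)
    (hb : ∀ s, |h s| ≤ C) : Continuous (Zs lam T h) := by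
  have hi : ∀ a b, IntervalIntegrable (fun s : ℝ => Complex.exp (-lam * s) * (h s : ℂ))
      MeasureTheory.volume a b := by
    intro a b
    have h1 : IntervalIntegrable (fun s : ℝ => (h s : ℂ)) MeasureTheory.volume a b := by
      refine (intervalIntegrable_const (c := C)).mono_fun ?_ ?_
      · exact (Complex.measurable_ofReal.comp hm).aestronglyMeasurable
      · refine Filter.Eventually.of_forall fun s => ?_
        simp only [Complex.norm_real, Real.norm_eq_abs]
        exact (hb s).trans (le_abs_self _)
    exact h1.continuousOn_mul (by fun_prop)
  have := intervalIntegral.continuous_primitive hi 0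
  unfold Zs
  fun_prop

theorem Zs_tendsto (lam : ℂ) (T : ℝ) (hn : ℕ → ℝ → ℝ) (h : ℝ → ℝ) (hc : ∀ n, Continuous (hn n)) (C : ℝ)
    (hb : ∀ n s, |hn n s| ≤ C) (hl : ∀ s, Filter.Tendsto (fun n => hn n s) Filter.atTop (nhds (h s)))
    (t : ℝ) :
    Filter.Tendsto (fun n => Zs lam T (hn n) t) Filter.atTop (nhds (Zs lam T h t)) := by
  have key : ∀ t : ℝ, Filter.Tendsto (fun n => ∫ s in (0:ℝ)..t, Complex.exp (-lam * s) * (hn n s : ℂ))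
      Filter.atTop (nhds (∫ s in (0:ℝ)..t, Complex.exp (-lam * s) * (h s : ℂ))) := by
    intro t
    refine intervalIntegral.tendsto_integral_filter_of_dominated_convergence
      (fun s : ℝ => ‖Complex.exp (-lam * s)‖ * C) ?_ ?_ ?_ ?_
    · refine Filter.Eventually.of_forall fun n => ?_
      have := hc n
      exact (by fun_prop : Continuous (fun s : ℝ => Complex.exp (-lam * s) * (hn n s : ℂ))).aestronglyMeasurable
    · refine Filter.Eventually.of_forall fun n => Filter.Eventually.of_forall fun s _ => ?_
      rw [norm_mul, Complex.norm_real]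
      exact mul_le_mul_of_nonneg_left (hb n s) (norm_nonneg _)
    · exact (by fun_prop : Continuous (fun s : ℝ => ‖Complex.exp (-lam * s)‖ * C)).intervalIntegrable _ _
    · refine Filter.Eventually.of_forall fun s _ => ?_
      exact ((Complex.continuous_ofReal.tendsto _).comp (hl s)).const_mul _
  unfold Zs
  exact (((key T).const_mul _).add (key t)).const_mul _

theorem Zs_const (lam : ℂ) (T d : ℝ) (hne : 1 - Complex.exp (lam * T) ≠ 0) (hl : lam ≠ 0) (t : ℝ) :
    Zs lam T (fun _ => d) t = - d / lam := by
  have hi : ∀ t : ℝ, (∫ s in (0:ℝ)..t, Complex.exp (-lam * s) * (d : ℂ)) =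
      (1 - Complex.exp (-(lam * t))) / lam * d := by
    intro t
    rw [intervalIntegral.integral_mul_const, integral_exp_mul_complex (neg_ne_zero.mpr hl)]
    congr 1
    simp
    field_simp
    ring
  unfold Zs
  rw [hi, hi, Complex.exp_neg, Complex.exp_neg]
  have := Complex.exp_ne_zero (lam * t)
  have := Complex.exp_ne_zero (lam * T)
  field_simp
  ring

theorem Zs_sub (lam : ℂ) (T : ℝ) (h k : ℝ → ℝ) (hh : Continuous h) (hk : Continuous k) (t : ℝ) :
    Zs lam T (fun s => h s - k s) t = Zs lam T h t - Zs lam T k t := by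
  have hi : ∀ t : ℝ, (∫ s in (0:ℝ)..t, Complex.exp (-lam * s) * ((h s - k s : ℝ) : ℂ)) =
      (∫ s in (0:ℝ)..t, Complex.exp (-lam * s) * (h s : ℂ)) -
      (∫ s in (0:ℝ)..t, Complex.exp (-lam * s) * (k s : ℂ)) := by
    intro t
    rw [← intervalIntegral.integral_sub]
    · congr 1; ext s; push_cast; ring
    · exact (by fun_prop : Continuous (fun s : ℝ => Complex.exp (-lam * s) * (h s : ℂ))).intervalIntegrable _ _
    · exact (by fun_prop : Continuous (fun s : ℝ => Complex.exp (-lam * s) * (k s : ℂ))).intervalIntegrable _ _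
  unfold Zs
  rw [hi, hi]; ring

theorem ker_nonneg (b w T τ : ℝ) (hw : 0 < w) (hwT : w * T < π) (hτ : τ ∈ Icc 0 T) :
    0 ≤ (Complex.exp ((⟨-b, w⟩ : ℂ) * τ) / (1 - Complex.exp ((⟨-b, w⟩ : ℂ) * T))).im := by
  have hs1 : 0 ≤ sin (w * τ) := sin_nonneg_of_nonneg_of_le_pi (by have := hτ.1; positivity)
    (by nlinarith [hτ.2])
  have hs2 : 0 ≤ sin (w * T - w * τ) := sin_nonneg_of_nonneg_of_le_pi (by nlinarith [hτ.2])
    (by nlinarith [hτ.1])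
  rw [sin_sub] at hs2
  rw [Complex.div_im, ← sub_div]
  refine div_nonneg ?_ (Complex.normSq_nonneg _)
  simp [Complex.exp_re, Complex.exp_im]
  have e1 := exp_pos (-(b * τ))
  have e2 := exp_pos (-(b * T))
  nlinarith [mul_nonneg e1.le hs1, mul_nonneg (mul_pos e1 e2).le hs2]

theorem one_sub_ne (b w T : ℝ) (hw : 0 < w) (hT : 0 < T) (hwT : w * T < π) :
    1 - Complex.exp ((⟨-b, w⟩ : ℂ) * T) ≠ 0 := by
  intro h
  have h1 := congrArg Complex.im h
  simp [Complex.exp_im] at h1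
  exact (sin_pos_of_pos_of_lt_pi (by positivity) hwT).ne' h1

theorem Zs_nonneg (b w T : ℝ) (hw : 0 < w) (hT : 0 < T) (hwT : w * T < π) (h : ℝ → ℝ)
    (hh : Continuous h) (h0 : ∀ s ∈ Icc 0 T, 0 ≤ h s) (t : ℝ) (ht : t ∈ Icc 0 T) :
    0 ≤ (Zs ⟨-b, w⟩ T h t).im := by
  have hne := one_sub_ne b w T hw hT hwT
  have hk := ker_nonneg b w T
  generalize (⟨-b, w⟩ : ℂ) = lam at *
  have hint : ∀ a b : ℝ, IntervalIntegrable (fun s : ℝ => Complex.exp (-lam * s) * (h s : ℂ))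
      MeasureTheory.volume a b := fun a b =>
    (by fun_prop : Continuous (fun s : ℝ => Complex.exp (-lam * s) * (h s : ℂ))).intervalIntegrable _ _
  have e : Zs lam T h t =
      (∫ s in (0:ℝ)..t, (h s : ℂ) * (Complex.exp (lam * (t - s : ℝ)) / (1 - Complex.exp (lam * T)))) +
      ∫ s in t..T, (h s : ℂ) * (Complex.exp (lam * (t - s + T : ℝ)) / (1 - Complex.exp (lam * T))) := by
    have i1 : ∀ s : ℝ, (h s : ℂ) * (Complex.exp (lam * (t - s : ℝ)) / (1 - Complex.exp (lam * T)))
        = (Complex.exp (lam * t) / (1 - Complex.exp (lam * T))) * (Complex.exp (-lam * s) * (h s : ℂ)) := by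
      intro s
      have : lam * (t - s : ℝ) = lam * t + -lam * s := by push_cast; ring
      rw [this, Complex.exp_add]; ring
    have i2 : ∀ s : ℝ, (h s : ℂ) * (Complex.exp (lam * (t - s + T : ℝ)) / (1 - Complex.exp (lam * T)))
        = (Complex.exp (lam * t) * Complex.exp (lam * T) / (1 - Complex.exp (lam * T))) * (Complex.exp (-lam * s) * (h s : ℂ)) := by
      intro s
      have : lam * (t - s + T : ℝ) = lam * t + -lam * s + lam * T := by push_cast; ring
      rw [this, Complex.exp_add, Complex.exp_add]; ring
    simp_rw [i1, i2]
    rw [intervalIntegral.integral_const_mul, intervalIntegral.integral_const_mul]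
    unfold Zs
    rw [← intervalIntegral.integral_add_adjacent_intervals (hint 0 t) (hint t T)]
    field_simp
    ring
  have him : ∀ (a b : ℝ) (F : ℝ → ℂ), Continuous F → a ≤ b → (∀ s ∈ Icc a b, 0 ≤ (F s).im) →
      0 ≤ (∫ s in a..b, F s).im := by
    intro a b F hF hab h0
    have := Complex.imCLM.intervalIntegral_comp_comm (hF.intervalIntegrable (μ := MeasureTheory.volume) a b)
    simp only [Complex.imCLM_apply] at this
    rw [← this]
    exact intervalIntegral.integral_nonneg hab h0
  rw [e, Complex.add_im]
  refine add_nonneg (him _ _ _ (by fun_prop) ht.1 ?_) (him _ _ _ (by fun_prop) ht.2 ?_)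
  · intro s hs
    rw [Complex.im_ofReal_mul]
    exact mul_nonneg (h0 s ⟨hs.1, hs.2.trans ht.2⟩)
      (hk _ hw hwT ⟨by linarith [hs.2], by linarith [hs.1, ht.2]⟩)
  · intro s hs
    rw [Complex.im_ofReal_mul]
    exact mul_nonneg (h0 s ⟨ht.1.trans hs.1, hs.2⟩)
      (hk _ hw hwT ⟨by linarith [hs.2, ht.1], by linarith [hs.1]⟩)

theorem pd_of (T : ℝ) (hT : 0 < T) (X X1 X2 : ℝ → ℝ) (h1 : ∀ t, HasDerivAt X (X1 t) t)
    (h2 : ∀ t, HasDerivAt X1 (X2 t) t) (h3 : Continuous X2) :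
    ContDiffOn ℝ 2 X (Icc 0 T) ∧ (∀ t ∈ Icc 0 T, pd1 T X t = X1 t) ∧
      (∀ t ∈ Icc 0 T, pd2 T X t = X2 t) := by
  have e1 : ∀ t ∈ Icc 0 T, pd1 T X t = X1 t := fun t ht =>
    (h1 t).hasDerivWithinAt.derivWithin (uniqueDiffOn_Icc hT t ht)
  refine ⟨?_, e1, ?_⟩
  · have d1 : deriv X = X1 := funext fun t => (h1 t).deriv
    have d2 : deriv X1 = X2 := funext fun t => (h2 t).deriv
    have c1 : ContDiff ℝ 1 X1 := contDiff_one_iff_deriv.mpr ⟨fun t => (h2 t).differentiableAt, d2 ▸ h3⟩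
    have : ContDiff ℝ (1 + 1) X := by
      rw [contDiff_succ_iff_deriv]
      exact ⟨fun t => (h1 t).differentiableAt, by simp, d1 ▸ c1⟩
    exact (by simpa [one_add_one_eq_two] using this : ContDiff ℝ 2 X).contDiffOn
  · intro t ht
    unfold pd2
    rw [derivWithin_congr e1 (e1 t ht)]
    exact (h2 t).hasDerivWithinAt.derivWithin (uniqueDiffOn_Icc hT t ht)

theorem cm_smooth (T a m cm : ℝ) (hT : 0 < T) (G : ℝ → ℝ → ℝ)
    (hGc : ContinuousOn (fun p : ℝ × ℝ => G p.1 p.2) (Set.Icc 0 T ×ˢ Set.Icc 0 T))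
    (hG1 : PropG1 T a m G)
    (hG4 : ∀ t ∈ Set.Icc 0 T, ∀ u ∈ Set.Icc 0 T, G u u ≤ G t u ∧ cm * G t u ≤ G u u)
    (X X1 X2 : ℝ → ℝ) (h1 : ∀ t, HasDerivAt X (X1 t) t)
    (h2 : ∀ t, HasDerivAt X1 (X2 t) t) (h3 : Continuous X2)
    (p0 : X 0 = X T) (p1 : X1 0 = X1 T)
    (hpos : ∀ t ∈ Icc 0 T, 0 ≤ X2 t + a * X1 t + m ^ 2 * X t)
    (t s : ℝ) (ht : t ∈ Icc 0 T) (hs : s ∈ Icc 0 T) : cm * X t ≤ X s := by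
  obtain ⟨d0, d1, d2⟩ := pd_of T hT X X1 X2 h1 h2 h3
  have cX : Continuous X := continuous_iff_continuousAt.mpr fun t => (h1 t).continuousAt
  have cX1 : Continuous X1 := continuous_iff_continuousAt.mpr fun t => (h2 t).continuousAt
  have ch : Continuous (fun t => X2 t + a * X1 t + m ^ 2 * X t) := by fun_prop
  have hsol : IsLinSol T a m (fun t => X2 t + a * X1 t + m ^ 2 * X t) X := by
    refine ⟨d0, fun t ht => by rw [d1 t ht, d2 t ht], p0, ?_⟩
    rw [d1 0 ⟨le_rfl, hT.le⟩, d1 T ⟨hT.le, le_rfl⟩, p1]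
  have hu := (hG1 _ ch.continuousOn).2 X hsol
  have cG : ∀ t ∈ Icc 0 T, ContinuousOn (fun u => G t u * (X2 u + a * X1 u + m ^ 2 * X u)) (Icc 0 T) := by
    intro t ht
    refine ContinuousOn.mul ?_ ch.continuousOn
    exact hGc.comp (f := fun u => (t, u)) (by fun_prop) (fun u hu => ⟨ht, hu⟩)
  have iG : ∀ t ∈ Icc 0 T, IntervalIntegrable (fun u => G t u * (X2 u + a * X1 u + m ^ 2 * X u))
      MeasureTheory.volume 0 T := fun t ht => (cG t ht).intervalIntegrable_of_Icc hT.le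
  rw [hu t ht, hu s hs, ← intervalIntegral.integral_const_mul]
  refine intervalIntegral.integral_mono_on hT.le ((iG t ht).const_mul _) (iG s hs) ?_
  intro u hu
  have e1 := (hG4 t ht u hu).2
  have e2 := (hG4 s hs u hu).1
  rw [← mul_assoc]
  exact mul_le_mul_of_nonneg_right (e1.trans e2) (hpos u hu)

theorem cm_jump (T a m cm : ℝ) (hT : 0 < T) (ha : 0 ≤ a) (hm : 0 < m) (hcm : 0 < cm) (G : ℝ → ℝ → ℝ)
    (hGc : ContinuousOn (fun p : ℝ × ℝ => G p.1 p.2) (Set.Icc 0 T ×ˢ Set.Icc 0 T))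
    (hG1 : PropG1 T a m G)
    (hG4 : ∀ t ∈ Set.Icc 0 T, ∀ u ∈ Set.Icc 0 T, G u u ≤ G t u ∧ cm * G t u ≤ G u u)
    (X X1 X2 : ℝ → ℝ) (h1 : ∀ t, HasDerivAt X (X1 t) t)
    (h2 : ∀ t, HasDerivAt X1 (X2 t) t) (h3 : Continuous X2)
    (p0 : X 0 = X T) (p1 : X1 T ≤ X1 0)
    (hpos : ∀ t ∈ Icc 0 T, 0 ≤ X2 t + a * X1 t + m ^ 2 * X t)
    (t s : ℝ) (ht : t ∈ Icc 0 T) (hs : s ∈ Icc 0 T) : cm * X t ≤ X s := by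
  set J := X1 0 - X1 T with hJ
  have hJ0 : 0 ≤ J := by linarith
  -- inequality for each n
  have key : ∀ n : ℕ, cm * (X t - J * T / (n + 2)) ≤
      X s + J * T / (n + 2) + (J * a + J * T * m ^ 2) / (n + 2) / m ^ 2 := by
    intro n
    have hn : (0:ℝ) < n + 2 := by positivity
    set ε := (J * a + J * T * m ^ 2) / (n + 2) / m ^ 2 with hε
    have hε0 : 0 ≤ ε := by positivity
    have hy : ∀ r ∈ Icc 0 T, 0 ≤ (r / T) ^ (n+2) ∧ (r / T) ^ (n+2) ≤ 1 ∧ 0 ≤ r / T ∧ r / T ≤ 1 := by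
      intro r hr
      have q1 : 0 ≤ r / T := div_nonneg hr.1 hT.le
      have q2 : r / T ≤ 1 := (div_le_one hT).mpr hr.2
      exact ⟨by positivity, pow_le_one₀ q1 q2, q1, q2⟩
    have := cm_smooth T a m cm hT G hGc hG1 hG4
      (fun r => X r + J * T / (n + 2) * ((r / T) ^ (n + 2) - r / T) + ε)
      (fun r => X1 r + J * ((r / T) ^ (n + 1) - 1 / (n + 2)))
      (fun r => X2 r + J * ((n + 1) * (r / T) ^ n / T)) ?_ ?_ (by fun_prop) ?_ ?_ ?_ t s ht hs
    · have k : 0 ≤ J * T / (n + 2) := by positivity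
      obtain ⟨a1, a2, a3, a4⟩ := hy t ht
      obtain ⟨b1, b2, b3, b4⟩ := hy s hs
      have l1 : cm * (X t - J * T / (n + 2)) ≤ cm * (X t + J * T / (n + 2) * ((t / T) ^ (n + 2) - t / T) + ε) :=
        mul_le_mul_of_nonneg_left (by nlinarith) hcm.le
      nlinarith
    · intro r
      have hd := ((((hasDerivAt_id r).div_const T).pow (n+2)).sub ((hasDerivAt_id r).div_const T)).const_mul
        (J * T / (n + 2))
      have := ((h1 r).add hd).add_const ε
      refine this.congr_deriv ?_
      simp
      field_simp
    · intro r
      have hd := ((((hasDerivAt_id r).div_const T).pow (n+1)).sub_const (1 / ((n:ℝ) + 2))).const_mul J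
      have := ((h2 r).add hd)
      refine this.congr_deriv ?_
      simp only [id, Nat.add_sub_cancel]
      push_cast
      ring
    · simp [p0, hT.ne']
    · simp [hT.ne']
      rw [hJ]
      ring
    · intro r hr
      obtain ⟨a1, a2, a3, a4⟩ := hy r hr
      have k1 : 0 ≤ J * ((n + 1) * (r / T) ^ n / T) := by positivity
      have k2 : 0 ≤ a * (J * (r / T) ^ (n + 1)) := by positivity
      have k3 : 0 ≤ m ^ 2 * (J * T / (n + 2) * (1 - r / T)) :=
        mul_nonneg (by positivity) (mul_nonneg (by positivity) (by linarith))
      have k4 : 0 ≤ m ^ 2 * (J * T / (n + 2) * (r / T) ^ (n + 2)) := by positivity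
      have k5 : m ^ 2 * ε = J * a / (n+2) + J * T / (n + 2) * m ^ 2 := by
        rw [hε]; field_simp
      have := hpos r hr
      have e : X2 r + J * ((n + 1) * (r / T) ^ n / T) + a * (X1 r + J * ((r / T) ^ (n + 1) - 1 / (n + 2))) +
          m ^ 2 * (X r + J * T / (n + 2) * ((r / T) ^ (n + 2) - r / T) + ε) =
          (X2 r + a * X1 r + m ^ 2 * X r) + J * ((n + 1) * (r / T) ^ n / T) + a * (J * (r / T) ^ (n + 1))
          + m ^ 2 * (J * T / (n + 2) * (1 - r / T)) + m ^ 2 * (J * T / (n + 2) * (r / T) ^ (n + 2)) := by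
        linear_combination k5
      rw [e]
      positivity
  have lim : ∀ C : ℝ, Filter.Tendsto (fun n : ℕ => C / ((n:ℝ) + 2)) Filter.atTop (nhds 0) := by
    intro C
    exact Filter.Tendsto.const_div_atTop
      (Filter.tendsto_atTop_add_const_right _ _ tendsto_natCast_atTop_atTop) C
  have l1 : Filter.Tendsto (fun n : ℕ => cm * (X t - J * T / (n + 2))) Filter.atTop
      (nhds (cm * (X t - 0))) := ((lim _).const_sub _).const_mul _
  have l2 : Filter.Tendsto (fun n : ℕ => X s + J * T / (n + 2) + (J * a + J * T * m ^ 2) / (n + 2) / m ^ 2)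
      Filter.atTop (nhds (X s + 0 + 0 / m ^ 2)) := ((lim _).const_add _).add ((lim _).div_const _)
  have := le_of_tendsto_of_tendsto' l1 l2 key
  simpa using this

theorem tanh_aux (y : ℝ) (hy : 0 ≤ y) :
    exp (-y) * (2 + 2 * y + y ^ 2) ≤ exp y * (2 - 2 * y + y ^ 2) := by
  have hd : ∀ y : ℝ, HasDerivAt (fun y => exp y * (2 - 2 * y + y ^ 2) - exp (-y) * (2 + 2 * y + y ^ 2))
      (y ^ 2 * (exp y + exp (-y))) y := by
    intro y
    have e1 : HasDerivAt (fun y : ℝ => exp (-y)) (exp (-y) * (-1)) y := (hasDerivAt_neg y).exp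
    have q1 : HasDerivAt (fun y : ℝ => 2 - 2 * y + y ^ 2) (-(2 * 1) + (2:ℕ) * y ^ (2-1)) y :=
      (((hasDerivAt_id y).const_mul 2).const_sub 2).add (hasDerivAt_pow 2 y)
    have q2 : HasDerivAt (fun y : ℝ => 2 + 2 * y + y ^ 2) (2 * 1 + (2:ℕ) * y ^ (2-1)) y :=
      (((hasDerivAt_id y).const_mul 2).const_add 2).add (hasDerivAt_pow 2 y)
    refine (((hasDerivAt_exp y).mul q1).sub (e1.mul q2)).congr_deriv ?_
    push_cast
    ring
  have hm : Monotone (fun y => exp y * (2 - 2 * y + y ^ 2) - exp (-y) * (2 + 2 * y + y ^ 2)) := by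
    refine monotone_of_deriv_nonneg (fun y => (hd y).differentiableAt) fun y => ?_
    rw [(hd y).deriv]
    positivity
  have := hm hy
  simp at this
  linarith

theorem exists_U (T a : ℝ) (hT : 0 < T) (ha : 0 ≤ a) : ∃ U U1 U2 : ℝ → ℝ,
    (∀ t, HasDerivAt U (U1 t) t) ∧ (∀ t, HasDerivAt U1 (U2 t) t) ∧ Continuous U2 ∧
    U 0 = 0 ∧ U T = 0 ∧ U1 T ≤ U1 0 ∧ (∀ t, U2 t + a * U1 t + 1 = 0) ∧
    1 < U (T / 2) * ((π / T) ^ 2 + (a / 2) ^ 2) := by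
  have hpi : (8:ℝ) < π ^ 2 := by nlinarith [pi_gt_three]
  rcases ha.eq_or_lt with h0 | ha
  · subst h0
    refine ⟨fun t => T / 2 * t - t ^ 2 / 2, fun t => T / 2 - t, fun _ => -1, ?_, ?_, continuous_const, ?_, ?_, ?_, ?_, ?_⟩
    · intro t
      refine (((hasDerivAt_id t).const_mul (T / 2)).sub ((hasDerivAt_pow 2 t).div_const 2)).congr_deriv ?_
      simp
    · intro t
      exact (hasDerivAt_id t).const_sub (T / 2)
    · simp
    · ring
    · simp; linarith
    · intro t; ring
    · have : (T / 2 * (T / 2) - (T / 2) ^ 2 / 2) * ((π / T) ^ 2 + (0 / 2) ^ 2) = π ^ 2 / 8 := by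
        field_simp; ring
      rw [this]; linarith
  · have hq1 : exp (-(a * T)) < 1 := by rw [exp_lt_one_iff]; simp; positivity
    have hqd : 0 < 1 - exp (-(a * T)) := by linarith
    set B := T / (a * (1 - exp (-(a * T)))) with hB
    have hB0 : 0 < B := by positivity
    have hde : ∀ t : ℝ, HasDerivAt (fun t => exp (-(a * t))) (exp (-(a * t)) * (-(a * 1))) t := fun t =>
      (((hasDerivAt_id t).const_mul a).neg).exp
    refine ⟨fun t => B * (1 - exp (-(a * t))) - t / a, fun t => a * B * exp (-(a * t)) - 1 / a,
      fun t => - a ^ 2 * B * exp (-(a * t)), ?_, ?_, by fun_prop, ?_, ?_, ?_, ?_, ?_⟩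
    · intro t
      refine ((((hde t).const_sub 1).const_mul B).sub ((hasDerivAt_id t).div_const a)).congr_deriv ?_
      ring
    · intro t
      refine (((hde t).const_mul (a * B)).sub_const (1 / a)).congr_deriv ?_
      ring
    · simp
    · have := hqd.ne'
      have hB2 : B * (1 - exp (-(a * T))) = T / a := by
        rw [hB, div_mul_eq_mul_div, mul_div_mul_right _ _ this]
      simp only
      rw [hB2, sub_self]
    · have : 0 < a * B := by positivity
      simp
      nlinarith
    · intro t; field_simp; ring
    · set y := a * T / 4 with hy
      have hy0 : 0 < y := by positivity
      set q := exp (-(a * (T / 2))) with hq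
      have hq0 : 0 < q := exp_pos _
      have hqq : exp (-(a * T)) = q ^ 2 := by
        rw [hq, ← exp_nat_mul]; congr 1; push_cast; ring
      have hql : q < 1 := by rw [hq, exp_lt_one_iff]; simp; positivity
      have ht := tanh_aux y hy0.le
      have ht2 : q * (2 + 2 * y + y ^ 2) ≤ 2 - 2 * y + y ^ 2 := by
        have e1 : q * exp y = exp (-y) := by
          rw [hq, ← exp_add]; congr 1; rw [hy]; ring
        have := exp_pos y
        rw [← e1] at ht
        refine le_of_mul_le_mul_left ?_ this
        linarith
      have hU : B * (1 - q) - T / 2 / a = T * (1 - q) / (2 * a * (1 + q)) := by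
        rw [hB, hqq]
        have : 1 - q ^ 2 = (1 - q) * (1 + q) := by ring
        rw [this]
        have : 1 - q ≠ 0 := by linarith
        field_simp
        ring
      simp only
      rw [hU]
      have hay : a = 4 * y / T := by rw [hy]; field_simp
      have : T * (1 - q) / (2 * a * (1 + q)) * ((π / T) ^ 2 + (a / 2) ^ 2) =
          ((1 - q) * (π ^ 2 + 4 * y ^ 2)) / (8 * y * (1 + q)) := by
        rw [hay]; field_simp; ring
      rw [this, one_lt_div (by positivity)]
      nlinarith [mul_pos (sub_pos.mpr hql) (sub_pos.mpr hpi)]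

theorem L_bound (T a m cm : ℝ) (hT : 0 < T) (ha : 0 ≤ a) (hm : 0 < m) (hcm : cm ∈ Ioo (0:ℝ) 1) (G : ℝ → ℝ → ℝ)
    (hGc : ContinuousOn (fun p : ℝ × ℝ => G p.1 p.2) (Set.Icc 0 T ×ˢ Set.Icc 0 T))
    (hG1 : PropG1 T a m G)
    (hG4 : ∀ t ∈ Set.Icc 0 T, ∀ u ∈ Set.Icc 0 T, G u u ≤ G t u ∧ cm * G t u ≤ G u u) :
    m ^ 2 < - log cm * ((π / T) ^ 2 + (a / 2) ^ 2) := by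
  obtain ⟨U, U1, U2, h1, h2, h3, u0, uT, uj, ue, ub⟩ := exists_U T a hT ha
  have cU : Continuous U := continuous_iff_continuousAt.mpr fun t => (h1 t).continuousAt
  have cU1 : Continuous U1 := continuous_iff_continuousAt.mpr fun t => (h2 t).continuousAt
  have := cm_jump T a m cm hT ha hm hcm.1 G hGc hG1 hG4 (fun t => exp (m ^ 2 * U t))
    (fun t => exp (m ^ 2 * U t) * (m ^ 2 * U1 t))
    (fun t => exp (m ^ 2 * U t) * (m ^ 2 * U1 t) * (m ^ 2 * U1 t) + exp (m ^ 2 * U t) * (m ^ 2 * U2 t))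
    (fun t => ((h1 t).const_mul _).exp)
    (fun t => (((h1 t).const_mul _).exp).mul ((h2 t).const_mul _)) (by fun_prop)
    (by simp [u0, uT]) (by simp only [u0, uT]; gcongr) ?_ (T / 2) 0 ⟨by linarith, by linarith⟩ ⟨le_rfl, hT.le⟩
  · rw [u0, mul_zero, exp_zero] at this
    have l := log_le_log (by have := hcm.1; positivity) this
    rw [log_mul hcm.1.ne' (exp_pos _).ne', log_exp, log_one] at l
    have hm2 : 0 < m ^ 2 := by positivity
    have hL : 0 < (π / T) ^ 2 + (a / 2) ^ 2 := by have := pi_pos; positivity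
    nlinarith
  · intro t _
    have : exp (m ^ 2 * U t) * (m ^ 2 * U1 t) * (m ^ 2 * U1 t) + exp (m ^ 2 * U t) * (m ^ 2 * U2 t) +
        a * (exp (m ^ 2 * U t) * (m ^ 2 * U1 t)) + m ^ 2 * exp (m ^ 2 * U t) =
        exp (m ^ 2 * U t) * (m ^ 2 * U1 t) ^ 2 := by
      linear_combination (exp (m ^ 2 * U t) * m ^ 2) * ue t
    rw [this]; positivity

/-- lower bound of the slope is below the threshold -/
theorem slope_bound (μ c m cm A B Lam : ℝ) (hμ0 : 0 < μ) (hc : 0 < c) (hA : 0 < A) (hAB : A ≤ B)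
    (hcm : cm ∈ Ioo (0:ℝ) 1)
    (h1 : c ^ 2 / (μ * A ^ 2) * (B / cm ^ μ - A) ≤ m ^ 2) (h2 : m ^ 2 < Lam)
    (h3 : m ^ 2 < - log cm * Lam) :
    c ^ 2 / (μ * A ^ 2) * (B - A + A * μ) < Lam := by
  set L := - log cm with hL
  have hL0 : 0 < L := by have := log_neg hcm.1 hcm.2; linarith
  have hp : cm ^ μ = exp (- (μ * L)) := by
    rw [rpow_def_of_pos hcm.1]; congr 1; rw [hL]; ring
  have hp2 : B / cm ^ μ = B * exp (μ * L) := by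
    rw [hp, exp_neg]; field_simp
  rw [hp2] at h1
  have he := add_one_le_exp (μ * L)
  have hk : 0 < c ^ 2 / (μ * A ^ 2) := by positivity
  have h4 : c ^ 2 / (μ * A ^ 2) * (B - A + A * (μ * L)) ≤ m ^ 2 := by
    refine le_trans (mul_le_mul_of_nonneg_left ?_ hk.le) h1
    have : 0 ≤ μ * L := by positivity
    nlinarith
  set k := c ^ 2 / (μ * A ^ 2)
  have kA : 0 < k * (A * μ) := by positivity
  have kB : 0 ≤ k * (B - A) := mul_nonneg hk.le (by linarith)
  rcases le_or_gt 1 L with h | h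
  · nlinarith
  · have : L * (k * (B - A + A * μ)) < L * Lam := by nlinarith
    exact lt_of_mul_lt_mul_left this hL0.le

theorem slope_mono (μ c A B M e : ℝ) (hμ0 : 0 < μ) (hμ : μ < 1/2) (hc : 0 < c) (hA : 0 < A) (he : A ≤ e) (hAB : A ≤ B)
    (hM : c ^ 2 / (μ * A ^ 2) * (B - A + A * μ) ≤ M) :
    MonotoneOn (fun x : ℝ => (e / μ) * x ^ (1 - 2 * μ) - (c / μ) * x ^ (1 - μ) + M * x)
      (Icc ((A / c) ^ (1 / μ)) ((B / c) ^ (1 / μ))) := by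
  have hB : 0 < B := hA.trans_le hAB
  have hpos : ∀ x ∈ Icc ((A / c) ^ (1 / μ)) ((B / c) ^ (1 / μ)), 0 < x := fun x hx =>
    lt_of_lt_of_le (by positivity) hx.1
  have hd : ∀ x, 0 < x → HasDerivAt (fun x : ℝ => (e / μ) * x ^ (1 - 2 * μ) - (c / μ) * x ^ (1 - μ) + M * x)
      ((e / μ) * ((1 - 2 * μ) * x ^ (1 - 2 * μ - 1)) - (c / μ) * ((1 - μ) * x ^ (1 - μ - 1)) + M * 1) x := by
    intro x hx
    exact (((hasDerivAt_rpow_const (Or.inl hx.ne')).const_mul _).sub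
      ((hasDerivAt_rpow_const (Or.inl hx.ne')).const_mul _)).add ((hasDerivAt_id x).const_mul M)
  refine monotoneOn_of_deriv_nonneg (convex_Icc _ _) ?_ ?_ ?_
  · intro x hx
    exact (hd x (hpos x hx)).continuousAt.continuousWithinAt
  · intro x hx
    exact (hd x (hpos x (interior_subset hx))).differentiableAt.differentiableWithinAt
  · intro x hx
    have hx := interior_subset hx
    have hx0 := hpos x hx
    rw [(hd x hx0).deriv]
    set w := x ^ μ with hw
    have hw0 : 0 < w := by positivity
    have hr : ∀ b : ℝ, 0 < b → ((b / c) ^ (1 / μ)) ^ μ = b / c := by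
      intro b hb
      rw [← rpow_mul (by positivity), one_div, inv_mul_cancel₀ hμ0.ne', rpow_one]
    have w1 : A / c ≤ w := by
      rw [← hr A hA]; exact rpow_le_rpow (by positivity) hx.1 hμ0.le
    have w2 : w ≤ B / c := by
      rw [← hr B hB]; exact rpow_le_rpow hx0.le hx.2 hμ0.le
    have i1 : x ^ (1 - μ - 1) = w⁻¹ := by
      rw [hw, ← rpow_neg hx0.le]; congr 1; ring
    have i2 : x ^ (1 - 2 * μ - 1) = w⁻¹ ^ 2 := by
      rw [hw, ← rpow_neg hx0.le, ← rpow_mul_natCast hx0.le]; congr 1; push_cast; ring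
    rw [i1, i2]
    set z := w⁻¹ with hz
    have hz0 : 0 < z := by positivity
    have z1 : z ≤ c / A := by
      rw [hz, ← inv_div]; exact inv_anti₀ (by positivity) w1
    have z2 : c / B ≤ z := by
      rw [hz, ← inv_div]; exact inv_anti₀ hw0 w2
    have z1' : A * z ≤ c := by rw [le_div_iff₀ hA] at z1; linarith
    have z2' : c ≤ B * z := by rw [div_le_iff₀ hB] at z2; linarith
    -- bound
    have s1 : c ^ 2 / (μ * A ^ 2) * (B - A + A * μ) = ((c / A) ^ 2 * (B - A + A * μ)) / μ := by
      field_simp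
    have s2 : z * (c * μ + (1 - 2 * μ) * (c - A * z)) ≤ (c / A) ^ 2 * (B - A + A * μ) := by
      have t1 : c - A * z ≤ (c / A) * (B - A) := by nlinarith
      have t2 : 0 ≤ c - A * z := by linarith
      have t3 : c * μ + (1 - 2 * μ) * (c - A * z) ≤ (c / A) * (B - A + A * μ) := by
        have : (c / A) * (A * μ) = c * μ := by field_simp
        nlinarith
      have t4 : 0 ≤ c * μ + (1 - 2 * μ) * (c - A * z) := by
        have := mul_nonneg (by linarith : (0:ℝ) ≤ 1 - 2 * μ) t2
        positivity
      calc _ ≤ (c / A) * ((c / A) * (B - A + A * μ)) := mul_le_mul z1 t3 t4 (by positivity)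
        _ = _ := by ring
    have s3 : z * (c * μ + (1 - 2 * μ) * (c - A * z)) / μ ≤ M := by
      refine le_trans ?_ (s1 ▸ hM)
      gcongr
    have s4 : e / μ * ((1 - 2 * μ) * z ^ 2) - c / μ * ((1 - μ) * z) + M * 1 =
        (e - A) * (1 - 2 * μ) * z ^ 2 / μ + (M - z * (c * μ + (1 - 2 * μ) * (c - A * z)) / μ) := by
      field_simp; ring
    rw [s4]
    refine add_nonneg (div_nonneg (mul_nonneg (mul_nonneg (by linarith) (by linarith)) (by positivity)) hμ0.le)
      (by linarith)

theorem f_end (μ c b e M : ℝ) (hμ0 : 0 < μ) (hc : 0 < c) (hb : 0 < b) :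
    (e / μ) * ((b / c) ^ (1 / μ)) ^ (1 - 2 * μ) - (c / μ) * ((b / c) ^ (1 / μ)) ^ (1 - μ) + M * (b / c) ^ (1 / μ)
      = ((b / c) ^ (1 / μ)) ^ (1 - 2 * μ) / μ * (e - b) + M * (b / c) ^ (1 / μ) := by
  have hx : 0 < (b / c) ^ (1 / μ) := by positivity
  have h1 : ((b / c) ^ (1 / μ)) ^ μ = b / c := by
    rw [← rpow_mul (by positivity), one_div, inv_mul_cancel₀ hμ0.ne', rpow_one]
  have h2 : ((b / c) ^ (1 / μ)) ^ (1 - μ) = ((b / c) ^ (1 / μ)) ^ (1 - 2 * μ) * (b / c) := by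
    calc ((b / c) ^ (1 / μ)) ^ (1 - μ) = ((b / c) ^ (1 / μ)) ^ (1 - 2 * μ + μ) := by congr 1; ring
      _ = _ := by rw [rpow_add hx, h1]
  rw [h2]
  field_simp

theorem statement10 (T a μ c m cm estar estar' : ℝ) (e : ℝ → ℝ)
    (ha : 0 ≤ a) (hμ0 : 0 < μ) (hμ : μ < 1/2) (hc : 0 < c) (hT : 0 < T)
    (he : ContinuousOn e (Set.Icc 0 T))
    (hestar : IsLeast (e '' Set.Icc 0 T) estar)
    (hestar' : IsGreatest (e '' Set.Icc 0 T) estar')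
    (hC5 : 0 < estar)
    (hm : 0 < m)
    (hC6 : c ^ 2 / (μ * estar ^ 2) * (estar' / cm ^ μ - estar) ≤ m ^ 2 ∧
      m ^ 2 < (Real.pi / T) ^ 2 + (a / 2) ^ 2)
    (hcm : cm ∈ Set.Ioo (0:ℝ) 1)
    (G : ℝ → ℝ → ℝ)
    (hGc : ContinuousOn (fun p : ℝ × ℝ => G p.1 p.2) (Set.Icc 0 T ×ˢ Set.Icc 0 T))
    (hG1 : PropG1 T a m G)
    (hGpos : ∀ t ∈ Set.Icc 0 T, ∀ u ∈ Set.Icc 0 T, 0 < G t u)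
    (hG3 : ∀ t ∈ Set.Icc 0 T, (∫ u in (0:ℝ)..T, G t u) = 1 / m ^ 2)
    (hG4 : ∀ t ∈ Set.Icc 0 T, ∀ u ∈ Set.Icc 0 T, G u u ≤ G t u ∧ cm * G t u ≤ G u u) :
    ∃ x : ℝ → ℝ, ContDiffOn ℝ 2 x (Set.Icc 0 T) ∧
      (∀ t ∈ Set.Icc 0 T, 0 < x t ∧ x t ≤ (1 / cm) * (estar' / c) ^ (1 / μ)) ∧
      (∀ t ∈ Set.Icc 0 T,
        pd2 T x t + a * pd1 T x t =
          (e t / μ) * x t ^ (1 - 2 * μ) - (c / μ) * x t ^ (1 - μ)) ∧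
      x 0 = x T ∧ pd1 T x 0 = pd1 T x T := by
  obtain ⟨hcond, hmL⟩ := hC6
  have hAB : estar ≤ estar' := hestar.2 hestar'.1
  have hB : 0 < estar' := hC5.trans_le hAB
  have hLb := L_bound T a m cm hT ha hm hcm G hGc hG1 hG4
  have hS := slope_bound μ c m cm estar estar' _ hμ0 hc hC5 hAB hcm hcond hmL hLb
  set S := c ^ 2 / (μ * estar ^ 2) * (estar' - estar + estar * μ) with hSdef
  -- choice of the frequency
  obtain ⟨w, hw, hwT, hwS⟩ : ∃ w : ℝ, 0 < w ∧ w * T < π ∧ S ≤ (a / 2) ^ 2 + w ^ 2 := by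
    have hp : 0 < π / T := by have := pi_pos; positivity
    set v := (max (S - (a / 2) ^ 2) 0 + (π / T) ^ 2) / 2 with hv
    have hv1 : max (S - (a / 2) ^ 2) 0 < (π / T) ^ 2 := max_lt (by linarith) (by positivity)
    have hv2 : 0 < v := by
      have := le_max_right (S - (a / 2) ^ 2) 0
      have : 0 < (π / T) ^ 2 := by positivity
      rw [hv]; linarith
    have hv3 := le_max_left (S - (a / 2) ^ 2) 0
    refine ⟨√v, sqrt_pos.mpr hv2, ?_, ?_⟩
    · rw [← lt_div_iff₀ hT, sqrt_lt' hp]; rw [hv]; linarith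
    · rw [sq_sqrt hv2.le, hv]; linarith
  set M := (a / 2) ^ 2 + w ^ 2 with hM
  have hM0 : 0 < M := by positivity
  set lam : ℂ := ⟨-(a / 2), w⟩ with hlam
  have hlam0 : lam ≠ 0 := by
    intro h; have := congrArg Complex.im h; simp [hlam] at this; exact hw.ne' this
  have hne : 1 - Complex.exp (lam * T) ≠ 0 := one_sub_ne (a / 2) w T hw hT hwT
  -- projection
  obtain ⟨P, hPc, hPm, hPi⟩ : ∃ P : ℝ → ℝ, Continuous P ∧ (∀ t, P t ∈ Icc 0 T) ∧ ∀ t ∈ Icc 0 T, P t = t :=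
    ⟨fun t => (projIcc 0 T hT.le t : ℝ), continuous_subtype_val.comp continuous_projIcc,
      fun t => (projIcc 0 T hT.le t).2, fun t ht => congrArg Subtype.val (projIcc_of_mem hT.le ht)⟩
  have hec : Continuous (fun t => e (P t)) := he.comp_continuous hPc hPm
  have heA : ∀ t, estar ≤ e (P t) := fun t => hestar.2 ⟨_, hPm t, rfl⟩
  have heB : ∀ t, e (P t) ≤ estar' := fun t => hestar'.2 ⟨_, hPm t, rfl⟩
  set f : ℝ → ℝ → ℝ := fun t x => (e (P t) / μ) * x ^ (1 - 2 * μ) - (c / μ) * x ^ (1 - μ) + M * x with hf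
  have hfc : ∀ y : ℝ → ℝ, Continuous y → Continuous (fun s => f s (y s)) := by
    intro y hy
    have i1 : Continuous (fun s => y s ^ (1 - 2 * μ)) := hy.rpow_const fun s => Or.inr (by linarith)
    have i2 : Continuous (fun s => y s ^ (1 - μ)) := hy.rpow_const fun s => Or.inr (by linarith)
    exact (((hec.div_const μ).mul i1).sub (continuous_const.mul i2)).add (continuous_const.mul hy)
  have hfx : ∀ s, Continuous (f s) := by
    intro s
    have i1 : Continuous (fun x : ℝ => x ^ (1 - 2 * μ)) := continuous_id.rpow_const fun s => Or.inr (by linarith)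
    have i2 : Continuous (fun x : ℝ => x ^ (1 - μ)) := continuous_id.rpow_const fun s => Or.inr (by linarith)
    simp only [hf]
    fun_prop
  set α := (estar / c) ^ (1 / μ) with hα
  set β := (estar' / c) ^ (1 / μ) with hβ
  have hα0 : 0 < α := by positivity
  have hβ0 : 0 < β := by positivity
  have hαβ : α ≤ β := by
    rw [hα, hβ]; gcongr
  have hfm : ∀ s, MonotoneOn (f s) (Icc α β) := fun s =>
    slope_mono μ c estar estar' M (e (P s)) hμ0 hμ hc hC5 (heA s) hAB hwS
  have hfα : ∀ s, M * α ≤ f s α := by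
    intro s
    have := f_end μ c estar (e (P s)) M hμ0 hc hC5
    rw [← hα] at this
    simp only [hf]
    rw [this]
    have : 0 ≤ α ^ (1 - 2 * μ) / μ * (e (P s) - estar) := mul_nonneg (by positivity) (by linarith [heA s])
    linarith
  have hfβ : ∀ s, f s β ≤ M * β := by
    intro s
    have := f_end μ c estar' (e (P s)) M hμ0 hc hB
    rw [← hβ] at this
    simp only [hf]
    rw [this]
    have : 0 ≤ β ^ (1 - 2 * μ) / μ * (estar' - e (P s)) := mul_nonneg (by positivity) (by linarith [heB s])
    linarith
  have hfl : ∀ s, ∀ x ∈ Icc α β, M * α ≤ f s x := fun s x hx =>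
    (hfα s).trans (hfm s ⟨le_rfl, hαβ⟩ hx hx.1)
  have hfu : ∀ s, ∀ x ∈ Icc α β, f s x ≤ M * β := fun s x hx =>
    (hfm s hx ⟨hαβ, le_rfl⟩ hx.2).trans (hfβ s)
  -- comparison
  have hcomp : ∀ h k : ℝ → ℝ, Continuous h → Continuous k → (∀ s, h s ≤ k s) → ∀ t ∈ Icc 0 T,
      (Zs lam T h t).im / w ≤ (Zs lam T k t).im / w := by
    intro h k hh hk hle t ht
    have := Zs_nonneg (a / 2) w T hw hT hwT (fun s => k s - h s) (by fun_prop)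
      (fun s _ => by linarith [hle s]) t ht
    rw [Zs_sub _ _ _ _ hk hh, Complex.sub_im] at this
    rw [← hlam] at this
    gcongr
    linarith
  have hconst : ∀ d t : ℝ, (Zs lam T (fun _ => M * d) t).im / w = d := by
    intro d t
    rw [Zs_const lam T _ hne hlam0]
    have : (-((M * d : ℝ) : ℂ) / lam).im = M * d * w / M := by
      have hn : Complex.normSq lam = M := by
        simp [Complex.normSq_apply, hlam, hM]; ring
      rw [Complex.div_im, hn]
      simp [hlam]
      ring
    rw [this]; field_simp
  have hZc : ∀ h : ℝ → ℝ, Continuous h → Continuous (Zs lam T h) := fun h hh =>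
    continuous_iff_continuousAt.mpr fun t => (Zs_hasDerivAt lam T h hh t).continuousAt
  set Op : (ℝ → ℝ) → ℝ → ℝ := fun y t => (Zs lam T (fun s => f s (y s)) (P t)).im / w with hOp
  have hOpc : ∀ y, Continuous y → Continuous (Op y) := by
    intro y hy
    have h1 := hZc _ (hfc y hy)
    exact (Complex.continuous_im.comp (h1.comp hPc)).div_const _
  have hOpl : ∀ y, Continuous y → (∀ s, y s ∈ Icc α β) → ∀ t, Op y t ∈ Icc α β := by
    intro y hy hyb t
    constructor
    · have := hcomp (fun _ => M * α) _ continuous_const (hfc y hy) (fun s => hfl s _ (hyb s)) (P t) (hPm t)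
      rwa [hconst] at this
    · have := hcomp _ (fun _ => M * β) (hfc y hy) continuous_const (fun s => hfu s _ (hyb s)) (P t) (hPm t)
      rwa [hconst] at this
  have hOpm : ∀ y z, Continuous y → Continuous z → (∀ s, y s ∈ Icc α β) → (∀ s, z s ∈ Icc α β) →
      (∀ s, y s ≤ z s) → ∀ t, Op y t ≤ Op z t := by
    intro y z hy hz hyb hzb hyz t
    exact hcomp _ _ (hfc y hy) (hfc z hz) (fun s => hfm s (hyb s) (hzb s) (hyz s)) (P t) (hPm t)
  -- iteration
  set Y : ℕ → ℝ → ℝ := fun n => Op^[n] (fun _ => α) with hY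
  have hYs : ∀ n, Y (n + 1) = Op (Y n) := fun n => Function.iterate_succ_apply' _ _ _
  have hYI : ∀ n, Continuous (Y n) ∧ ∀ s, Y n s ∈ Icc α β := by
    intro n
    induction n with
    | zero => exact ⟨continuous_const, fun s => ⟨le_rfl, hαβ⟩⟩
    | succ n ih => rw [hYs]; exact ⟨hOpc _ ih.1, hOpl _ ih.1 ih.2⟩
  have hYm : ∀ n s, Y n s ≤ Y (n + 1) s := by
    intro n
    induction n with
    | zero => intro s; exact ((hYI 1).2 s).1
    | succ n ih =>
      intro s
      rw [hYs n, hYs (n + 1)]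
      exact hOpm _ _ (hYI n).1 (hYI (n+1)).1 (hYI n).2 (hYI (n+1)).2 ih s
  set y : ℝ → ℝ := fun t => ⨆ n, Y n t with hy
  have hlim : ∀ t, Filter.Tendsto (fun n => Y n t) Filter.atTop (nhds (y t)) := fun t =>
    tendsto_atTop_ciSup (monotone_nat_of_le_succ fun n => hYm n t)
      ⟨β, by rintro _ ⟨n, rfl⟩; exact ((hYI n).2 t).2⟩
  have hyb : ∀ t, y t ∈ Icc α β := fun t =>
    isClosed_Icc.mem_of_tendsto (hlim t) (Filter.Eventually.of_forall fun n => (hYI n).2 t)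
  have hhlim : ∀ s, Filter.Tendsto (fun n => f s (Y n s)) Filter.atTop (nhds (f s (y s))) := fun s =>
    ((hfx s).tendsto _).comp (hlim s)
  have hfabs : ∀ s, ∀ x ∈ Icc α β, |f s x| ≤ M * β := fun s x hx => by
    rw [abs_of_nonneg (le_trans (by positivity) (hfl s x hx))]; exact hfu s x hx
  have hfix : ∀ t, y t = Op y t := by
    intro t
    have h1 := Zs_tendsto lam T (fun n s => f s (Y n s)) (fun s => f s (y s)) (fun n => hfc _ (hYI n).1)
      (M * β) (fun n s => hfabs s _ ((hYI n).2 s)) hhlim (P t)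
    have h2 : Filter.Tendsto (fun n => Y (n + 1) t) Filter.atTop (nhds (Op y t)) := by
      simp only [hYs]
      exact ((Complex.continuous_im.tendsto _).comp h1).div_const _
    exact tendsto_nhds_unique ((Filter.tendsto_add_atTop_iff_nat 1).mpr (hlim t)) h2
  have hmeas : Measurable (fun s => f s (y s)) :=
    measurable_of_tendsto_metrizable (fun n => (hfc _ (hYI n).1).measurable) (tendsto_pi_nhds.mpr hhlim)
  have hyc : Continuous y := by
    have h1 := Zs_continuous lam T _ hmeas (M * β) (fun s => hfabs s _ (hyb s))
    rw [funext hfix]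
    exact (Complex.continuous_im.comp (h1.comp hPc)).div_const _
  have hcont := hfc y hyc
  -- the solution
  set Z := Zs lam T (fun s => f s (y s)) with hZ
  have dZ : ∀ t, HasDerivAt Z (lam * Z t + (f t (y t) : ℂ)) t := Zs_hasDerivAt lam T _ hcont
  have cZ : Continuous Z := hZc _ hcont
  have dim : ∀ (F : ℝ → ℂ) (F' : ℂ) (t : ℝ), HasDerivAt F F' t → HasDerivAt (fun t => (F t).im) F'.im t :=
    fun F F' t h => Complex.imCLM.hasFDerivAt.comp_hasDerivAt t h
  have hd1 : ∀ t, HasDerivAt (fun t => (Z t).im / w) ((lam * Z t).im / w) t := by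
    intro t
    refine ((dim _ _ t (dZ t)).div_const w).congr_deriv ?_
    simp
  have hd2 : ∀ t, HasDerivAt (fun t => (lam * Z t).im / w) ((lam * (lam * Z t + (f t (y t) : ℂ))).im / w) t := by
    intro t
    exact (dim _ _ t ((dZ t).const_mul lam)).div_const w
  obtain ⟨r0, r1, r2⟩ := pd_of T hT _ _ _ hd1 hd2 (by
    have : Continuous (fun t => lam * (lam * Z t + (f t (y t) : ℂ))) :=
      continuous_const.mul ((continuous_const.mul cZ).add (Complex.continuous_ofReal.comp hcont))
    exact (Complex.continuous_im.comp this).div_const _)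
  have hxy : ∀ t ∈ Icc 0 T, (Z t).im / w = y t := by
    intro t ht
    rw [hfix t]; simp only [hOp, hPi t ht]; rfl
  have hper : Z 0 = Z T := Zs_per lam T _ hne
  have m0 : (0:ℝ) ∈ Icc 0 T := ⟨le_rfl, hT.le⟩
  have mT : T ∈ Icc 0 T := ⟨hT.le, le_rfl⟩
  refine ⟨fun t => (Z t).im / w, r0, ?_, ?_, ?_, ?_⟩
  · intro t ht
    simp only [hxy t ht]
    refine ⟨hα0.trans_le (hyb t).1, (hyb t).2.trans ?_⟩
    have : 1 ≤ 1 / cm := by rw [one_le_div hcm.1]; exact hcm.2.le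
    nlinarith
  · intro t ht
    rw [r1 t ht, r2 t ht]
    simp only
    have hxt := hxy t ht
    have e1 : (lam * (lam * Z t + (f t (y t) : ℂ))).im / w + a * ((lam * Z t).im / w) =
        f t (y t) - M * ((Z t).im / w) := by
      simp [hlam, hM]
      field_simp
      ring
    rw [e1, hxt]
    simp only [hf, hPi t ht]
    ring
  · simp only [hper]
  · rw [r1 0 m0, r1 T mT, hper]
end
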